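/- For the exponential random graph model with parameter β in Dobrushin's uniqueness region Φ_β'(1) < 2 (with β subcritical), let H be any fixed finite graph, possibly with isolated vertices, with v vertices and e ≥ 1 edges. Then there exists a constant C > 0, depending only on β₁,…,β_k, H₁,…,H_k and H, such that for all n, Var(|Hom(H, G_Y)| − 2 n^{v−2} e p^{e−1} σ_n W_n) ≤ C n^{2v−3}. -/

import Mathlib

open MeasureTheory ProbabilityTheory Real Finset

noncomputable section

/-- The index set `I = {(i,j) : 1 ≤ i < j ≤ n}` of potential edges on `n` labeled vertices. -/
def EdgeIdx (n : ℕ) : Type := {p : Fin n × Fin n // p.1 < p.2}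

instance (n : ℕ) : Fintype (EdgeIdx n) := by unfold EdgeIdx; infer_instance
instance (n : ℕ) : DecidableEq (EdgeIdx n) := by unfold EdgeIdx; infer_instance

/-- Adjacency of the graph `G_y` encoded by the edge-indicator vector `y`. -/
def yAdj {n : ℕ} (y : EdgeIdx n → Bool) (a b : Fin n) : Bool :=
  if h : a < b then y ⟨(a, b), h⟩ else if h' : b < a then y ⟨(b, a), h'⟩ else false

/-- The number of edges of a graph `H`. -/
def eCount {V : Type} [Fintype V] (H : SimpleGraph V) : ℕ :=
  Nat.card H.edgeSet

/-- `|Hom(H, G_y)|`: the number of injective maps from the vertex set of `H` to `Fin n`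
mapping every edge of `H` to an edge of `G_y`. -/
def homCount {V : Type} [Fintype V] {n : ℕ} (H : SimpleGraph V) (y : EdgeIdx n → Bool) : ℕ :=
  Nat.card {φ : V → Fin n //
    Function.Injective φ ∧ ∀ a b, H.Adj a b → yAdj y (φ a) (φ b) = true}

/-- `|Hom(H, G_y, s)|`: the number of pairs `(φ, (u, v))` where `φ` is injective, `(u, v)` is
an ordered pair of adjacent vertices of `H` with `{φ u, φ v} = s`, and every edge of `H` other
than `{u, v}` is mapped by `φ` to an edge of `G_y` (regardless of whether the edge `s` is
present in `G_y`). -/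
def homCountAt {V : Type} [Fintype V] {n : ℕ} (H : SimpleGraph V) (y : EdgeIdx n → Bool)
    (s : EdgeIdx n) : ℕ :=
  Nat.card {t : (V → Fin n) × V × V //
    Function.Injective t.1 ∧ H.Adj t.2.1 t.2.2 ∧
    Sym2.mk (t.1 t.2.1, t.1 t.2.2) = Sym2.mk (s.1.1, s.1.2) ∧
    ∀ a b, H.Adj a b → Sym2.mk (a, b) ≠ Sym2.mk (t.2.1, t.2.2) →
      yAdj y (t.1 a) (t.1 b) = true}

section ERGM

variable {k : ℕ} (β : Fin (k + 1) → ℝ) (v : Fin (k + 1) → ℕ)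
  (H : ∀ j : Fin (k + 1), SimpleGraph (Fin (v j)))

/-- The (unnormalized) ERGM weight `exp (Σ_j β_j n^{2−v_j} |Hom(H_j, G_y)|)`. -/
def ergmWeight (n : ℕ) (y : EdgeIdx n → Bool) : ℝ :=
  Real.exp (∑ j, β j * (n : ℝ) ^ ((2 : ℤ) - (v j : ℤ)) * (homCount (H j) y : ℝ))

/-- The ERGM normalizing constant. -/
def ergmZ (n : ℕ) : ℝ := ∑ y : EdgeIdx n → Bool, ergmWeight β v H n y

/-- The ERGM probability of the configuration `y`. -/
def ergmProb (n : ℕ) (y : EdgeIdx n → Bool) : ℝ := ergmWeight β v H n y / ergmZ β v H n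

/-- Expectation of `G(Y)` under the ERGM. -/
def ergmExp (n : ℕ) (G : (EdgeIdx n → Bool) → ℝ) : ℝ :=
  ∑ y : EdgeIdx n → Bool, ergmProb β v H n y * G y

/-- Variance of `G(Y)` under the ERGM. -/
def ergmVar (n : ℕ) (G : (EdgeIdx n → Bool) → ℝ) : ℝ :=
  ergmExp β v H n (fun y => (G y - ergmExp β v H n G) ^ 2)

/-- The total number of edges of `G_y`. -/
def edgeSum {n : ℕ} (y : EdgeIdx n → Bool) : ℝ :=
  ∑ s : EdgeIdx n, (if y s then (1 : ℝ) else 0)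

/-- `Φ_β(a) = Σ_j β_j e_j a^{e_j − 1}`. -/
def PhiFn : ℝ → ℝ := fun a =>
  ∑ j, β j * (eCount (H j) : ℝ) * a ^ (eCount (H j) - 1)

/-- `φ_β(a) = e^{2Φ_β(a)} / (e^{2Φ_β(a)} + 1)`. -/
def phiFn : ℝ → ℝ := fun a =>
  Real.exp (2 * PhiFn β v H a) / (Real.exp (2 * PhiFn β v H a) + 1)

/-- `σ_n² = N p (1−p) / (1 − 2 p (1−p) Φ_β'(p))` with `N = n(n−1)/2`. -/
def sigmaSq (p : ℝ) (n : ℕ) : ℝ :=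
  ((n : ℝ) * ((n : ℝ) - 1) / 2) * p * (1 - p) /
    (1 - 2 * p * (1 - p) * deriv (PhiFn β v H) p)

/-- `μ_n = E Σ_{s ∈ I} Y_s`. -/
def muN (n : ℕ) : ℝ := ergmExp β v H n (edgeSum)

/-- The standardized number of edges `W_n`. -/
def Wn (p : ℝ) (n : ℕ) (y : EdgeIdx n → Bool) : ℝ :=
  (edgeSum y - muN β v H n) / Real.sqrt (sigmaSq β v H p n)

end ERGM

/-- A linear map that is symmetric with respect to a positive weight and has no negative
eigenvalue induces a nonnegative quadratic form. -/
theorem weighted_form_nonneg {Ω : Type*} [Fintype Ω] [DecidableEq Ω] (μ : Ω → ℝ)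
    (hμ : ∀ y, 0 < μ y) (A : (Ω → ℝ) →ₗ[ℝ] (Ω → ℝ))
    (hsymm : ∀ f g : Ω → ℝ, ∑ y, μ y * (f y * A g y) = ∑ y, μ y * (A f y * g y))
    (heig : ∀ (f : Ω → ℝ) (lam : ℝ), f ≠ 0 → A f = lam • f → 0 ≤ lam) (f : Ω → ℝ) :
    0 ≤ ∑ y, μ y * (f y * A f y) := by
  have hs : ∀ y, 0 < √(μ y) := fun y => Real.sqrt_pos.2 (hμ y)
  have hss : ∀ y, √(μ y) * √(μ y) = μ y := fun y => Real.mul_self_sqrt (hμ y).le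
  let T : (Ω → ℝ) →ₗ[ℝ] (Ω → ℝ) :=
    { toFun := fun w y => √(μ y) * w y
      map_add' := fun u w => by ext y; simp [mul_add]
      map_smul' := fun c w => by ext y; simp; ring }
  let R : (Ω → ℝ) →ₗ[ℝ] (Ω → ℝ) :=
    { toFun := fun w y => w y / √(μ y)
      map_add' := fun u w => by ext y; simp [add_div]
      map_smul' := fun c w => by ext y; simp; ring }
  let B : (Ω → ℝ) →ₗ[ℝ] (Ω → ℝ) := T ∘ₗ A ∘ₗ R
  have hB : ∀ w y, B w y = √(μ y) * A (R w) y := fun w y => rfl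
  have hR : ∀ w y, R w y = w y / √(μ y) := fun w y => rfl
  have hform : ∀ u w : Ω → ℝ, ∑ y, u y * B w y = ∑ y, μ y * (R u y * A (R w) y) := by
    intro u w
    refine Finset.sum_congr rfl fun y _ => ?_
    have h1 : u y = √(μ y) * R u y := by rw [hR, mul_div_cancel₀ _ (hs y).ne']
    rw [hB, h1]
    linear_combination (R u y * A (R w) y) * hss y
  have hBsymm : ∀ u w : Ω → ℝ, ∑ y, u y * B w y = ∑ y, w y * B u y := by
    intro u w
    rw [hform, hform, hsymm]
    refine Finset.sum_congr rfl fun y _ => by ring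
  let M : Matrix Ω Ω ℝ := LinearMap.toMatrix' B
  have hM : ∀ w, M.mulVec w = B w := fun w => LinearMap.toMatrix'_mulVec B w
  have hherm : M.IsHermitian := by
    ext i j
    have h := hBsymm (Pi.single j 1) (Pi.single i 1)
    simp only [Pi.single_apply, ite_mul, one_mul, zero_mul, Finset.sum_ite_eq', Finset.mem_univ,
      if_true] at h
    simp only [Matrix.conjTranspose_apply, star_trivial, M, LinearMap.toMatrix'_apply]
    convert h using 2
  have hpsd : M.PosSemidef := by
    rw [hherm.posSemidef_iff_eigenvalues_nonneg]
    intro i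
    set w : Ω → ℝ := ⇑(hherm.eigenvectorBasis i) with hw
    have h1 : B w = hherm.eigenvalues i • w := by
      rw [← hM]; exact hherm.mulVec_eigenvectorBasis i
    have hw0 : w ≠ 0 := by
      intro h
      have := hherm.eigenvectorBasis.orthonormal.ne_zero i
      apply this
      ext y
      exact congrFun h y
    refine heig (R w) _ ?_ ?_
    · intro h
      apply hw0
      ext y
      have := congrFun h y
      rw [hR] at this
      simpa [(hs y).ne'] using this
    · ext y
      have := congrFun h1 y
      rw [hB] at this
      simp only [Pi.smul_apply, smul_eq_mul] at this ⊢
      rw [hR, ← mul_div_assoc, ← this, mul_div_cancel_left₀ _ (hs y).ne']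
  have h := hpsd.dotProduct_mulVec_nonneg (T f)
  have hRT : R (T f) = f := by
    ext y
    change √(μ y) * f y / √(μ y) = f y
    rw [mul_div_cancel_left₀ _ (hs y).ne']
  rw [hM] at h
  simp only [dotProduct, star_trivial] at h
  rw [hform, hRT] at h
  exact h

section SpinSystem

variable {S : Type} [DecidableEq S]

/-- The discrete derivative of `f` in the direction of the coordinate `s`. -/
def discDeriv (s : S) (f : (S → Bool) → ℝ) (y : S → Bool) : ℝ :=
  f (Function.update y s true) - f (Function.update y s false)

/-- The conditional probability that the spin at `s` is `true` given the other spins. -/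
def condProb (μ : (S → Bool) → ℝ) (s : S) (y : S → Bool) : ℝ :=
  μ (Function.update y s true) / (μ (Function.update y s true) + μ (Function.update y s false))

/-- The conditional expectation of `f` given all spins other than the one at `s`. -/
def glauber (μ : (S → Bool) → ℝ) (s : S) (f : (S → Bool) → ℝ) (y : S → Bool) : ℝ :=
  condProb μ s y * f (Function.update y s true) +
    (1 - condProb μ s y) * f (Function.update y s false)

theorem update_self_or (s : S) (y : S → Bool) :
    Function.update y s true = y ∨ Function.update y s false = y := by
  cases h : y s
  · right; rw [← h]; exact Function.update_eq_self s y
  · left; rw [← h]; exact Function.update_eq_self s y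

theorem condProb_update (μ : (S → Bool) → ℝ) (s : S) (y : S → Bool) (b : Bool) :
    condProb μ s (Function.update y s b) = condProb μ s y := by
  simp [condProb]

theorem glauber_update (μ : (S → Bool) → ℝ) (s : S) (f : (S → Bool) → ℝ) (y : S → Bool)
    (b : Bool) : glauber μ s f (Function.update y s b) = glauber μ s f y := by
  simp [glauber, condProb_update]

theorem condProb_mem_Icc {μ : (S → Bool) → ℝ} (hμ : ∀ y, 0 < μ y) (s : S) (y : S → Bool) :
    0 ≤ condProb μ s y ∧ condProb μ s y ≤ 1 := by
  have h1 := hμ (Function.update y s true)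
  have h0 := hμ (Function.update y s false)
  refine ⟨by unfold condProb; positivity, ?_⟩
  unfold condProb
  rw [div_le_one (by positivity)]
  linarith

variable [Fintype S]

/-- The expectation of `f` under the weights `μ`. -/
def wMean (μ f : (S → Bool) → ℝ) : ℝ := ∑ y, μ y * f y

theorem sum_update_add_sum_update (s : S) (F : (S → Bool) → ℝ) :
    ∑ y, (F (Function.update y s true) + F (Function.update y s false)) = 2 * ∑ y, F y := by
  have hinv : Function.Involutive (fun y : S → Bool => Function.update y s (!y s)) := by
    intro y
    simp
  have h1 : ∑ y : S → Bool, F (Function.update y s (!y s)) = ∑ y, F y :=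
    Equiv.sum_comp hinv.toPerm F
  have h2 : ∀ y : S → Bool, F (Function.update y s true) + F (Function.update y s false) =
      F y + F (Function.update y s (!y s)) := by
    intro y
    cases h : y s
    · have : Function.update y s false = y := by rw [← h]; exact Function.update_eq_self s y
      simp [this, add_comm]
    · have : Function.update y s true = y := by rw [← h]; exact Function.update_eq_self s y
      simp [this]
  rw [Finset.sum_congr rfl fun y _ => h2 y, Finset.sum_add_distrib, h1]
  ring

theorem wMean_glauber_mul {μ : (S → Bool) → ℝ} (hμ : ∀ y, 0 < μ y) (s : S)
    (f g : (S → Bool) → ℝ) :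
    wMean μ (fun y => glauber μ s f y * g y) =
      wMean μ (fun y => glauber μ s f y * glauber μ s g y) := by
  have key : ∀ F : (S → Bool) → ℝ, ∑ y, F y =
      (∑ y, (F (Function.update y s true) + F (Function.update y s false))) / 2 := by
    intro F; rw [sum_update_add_sum_update]; ring
  unfold wMean
  rw [key, key (fun y => μ y * (glauber μ s f y * glauber μ s g y))]
  congr 1
  refine Finset.sum_congr rfl fun y _ => ?_
  simp only [glauber_update]
  have h1 := hμ (Function.update y s true)
  have h0 := hμ (Function.update y s false)
  have : glauber μ s g y * (μ (Function.update y s true) + μ (Function.update y s false)) =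
      μ (Function.update y s true) * g (Function.update y s true) +
      μ (Function.update y s false) * g (Function.update y s false) := by
    unfold glauber condProb
    field_simp
    ring
  linear_combination (-glauber μ s f y) * this

theorem wMean_glauber {μ : (S → Bool) → ℝ} (hμ : ∀ y, 0 < μ y) (s : S)
    (f : (S → Bool) → ℝ) : wMean μ (glauber μ s f) = wMean μ f := by
  have h := wMean_glauber_mul hμ s (fun _ => 1) f
  have h1 : ∀ y, glauber μ s (fun _ => (1 : ℝ)) y = 1 := fun y => by simp [glauber]
  simp only [h1, one_mul] at h
  exact h.symm

/-- In the uniqueness regime, an eigenfunction of the Glauber generator with a small eigenvalue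
is constant. -/
theorem discDeriv_eq_zero_of_eigen {μ : (S → Bool) → ℝ} (hμ : ∀ y, 0 < μ y)
    {R : S → S → ℝ} {θ lam : ℝ}
    (hR : ∀ s t y, s ≠ t → |discDeriv t (condProb μ s) y| ≤ R s t)
    (hRsum : ∀ t, ∑ s ∈ univ.erase t, R s t ≤ θ) (hlam : lam < 1 - θ)
    {f : (S → Bool) → ℝ} (hf : ∀ y, ∑ s, (f y - glauber μ s f y) = lam * f y)
    (t : S) (y : S → Bool) : discDeriv t f y = 0 := by
  obtain ⟨⟨t₀, y₀⟩, -, hmax⟩ := Finset.exists_max_image (univ : Finset (S × (S → Bool)))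
    (fun x => |discDeriv x.1 f x.2|) ⟨(t, y), mem_univ _⟩
  set M := |discDeriv t₀ f y₀| with hM
  have hle : ∀ t y, |discDeriv t f y| ≤ M := fun t y => hmax (t, y) (mem_univ _)
  suffices hM0 : M ≤ 0 by
    have := (hle t y).trans hM0
    exact abs_nonpos_iff.1 this
  by_contra! hpos
  have hstep : ∀ s, s ≠ t₀ → |discDeriv t₀ (glauber μ s f) y₀| ≤ M + R s t₀ * M := by
    intro s hs
    set y1 := Function.update y₀ t₀ true
    set y0 := Function.update y₀ t₀ false
    have e1 : ∀ b, f (Function.update y1 s b) - f (Function.update y0 s b) =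
        discDeriv t₀ f (Function.update y₀ s b) := by
      intro b
      simp only [discDeriv, y1, y0, Function.update_comm hs]
    have e2 : discDeriv t₀ (glauber μ s f) y₀ =
        condProb μ s y1 * discDeriv t₀ f (Function.update y₀ s true) +
        (1 - condProb μ s y1) * discDeriv t₀ f (Function.update y₀ s false) +
        discDeriv t₀ (condProb μ s) y₀ * discDeriv s f y0 := by
      rw [← e1, ← e1]
      change glauber μ s f y1 - glauber μ s f y0 = _ + _ +
        (condProb μ s y1 - condProb μ s y0) *
          (f (Function.update y0 s true) - f (Function.update y0 s false))
      unfold glauber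
      ring
    obtain ⟨hp0, hp1⟩ := condProb_mem_Icc hμ s y1
    rw [e2]
    refine (abs_add_le _ _).trans (add_le_add ((abs_add_le _ _).trans ?_) ?_)
    · rw [abs_mul, abs_mul, abs_of_nonneg hp0, abs_of_nonneg (sub_nonneg.2 hp1)]
      have h1 := mul_le_mul_of_nonneg_left (hle t₀ (Function.update y₀ s true)) hp0
      have h2 := mul_le_mul_of_nonneg_left (hle t₀ (Function.update y₀ s false))
        (sub_nonneg.2 hp1)
      linarith
    · rw [abs_mul]
      exact mul_le_mul (hR s t₀ y₀ hs) (hle _ _) (abs_nonneg _)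
        ((abs_nonneg _).trans (hR s t₀ y₀ hs))
  have hself : discDeriv t₀ (glauber μ t₀ f) y₀ = 0 := by
    simp [discDeriv, glauber_update]
  have hsum : ∑ s, (discDeriv t₀ f y₀ - discDeriv t₀ (glauber μ s f) y₀) =
      lam * discDeriv t₀ f y₀ := by
    have a := hf (Function.update y₀ t₀ true)
    have b := hf (Function.update y₀ t₀ false)
    have : ∀ s, discDeriv t₀ f y₀ - discDeriv t₀ (glauber μ s f) y₀ =
        (f (Function.update y₀ t₀ true) - glauber μ s f (Function.update y₀ t₀ true)) -
        (f (Function.update y₀ t₀ false) - glauber μ s f (Function.update y₀ t₀ false)) := by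
      intro s; simp only [discDeriv]; ring
    rw [Finset.sum_congr rfl fun s _ => this s, Finset.sum_sub_distrib, a, b]
    simp only [discDeriv]; ring
  rw [← Finset.add_sum_erase _ _ (mem_univ t₀), hself, Finset.sum_sub_distrib] at hsum
  simp only [Finset.sum_const, nsmul_eq_mul, Finset.card_erase_of_mem (mem_univ t₀)] at hsum
  set m : ℝ := (((univ : Finset S).card - 1 : ℕ) : ℝ)
  have hm : 0 ≤ m := Nat.cast_nonneg _
  have hb : |∑ s ∈ univ.erase t₀, discDeriv t₀ (glauber μ s f) y₀| ≤ m * M + θ * M := by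
    refine (Finset.abs_sum_le_sum_abs _ _).trans ?_
    refine (Finset.sum_le_sum fun s hs => hstep s (Finset.ne_of_mem_erase hs)).trans ?_
    rw [Finset.sum_add_distrib, ← Finset.sum_mul]
    simp only [Finset.sum_const, nsmul_eq_mul, Finset.card_erase_of_mem (mem_univ t₀)]
    have := mul_le_mul_of_nonneg_right (hRsum t₀) hpos.le
    simp only [m]
    linarith
  have heq : ∑ s ∈ univ.erase t₀, discDeriv t₀ (glauber μ s f) y₀ =
      (1 + m - lam) * discDeriv t₀ f y₀ := by linarith
  rw [heq, abs_mul] at hb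
  have h3 : (1 + m - lam) * M ≤ |1 + m - lam| * M :=
    mul_le_mul_of_nonneg_right (le_abs_self _) hpos.le
  nlinarith

theorem eq_of_discDeriv_eq_zero {f : (S → Bool) → ℝ} (hf : ∀ t y, discDeriv t f y = 0)
    (y z : S → Bool) : f y = f z := by
  have hup : ∀ (y : S → Bool) (s : S) (b : Bool), f (Function.update y s b) = f y := by
    intro y s b
    have h := sub_eq_zero.1 (hf s y)
    rcases update_self_or s y with e | e <;> cases b
    · rw [← h, e]
    · rw [e]
    · rw [e]
    · rw [h, e]
  have h : ∀ T : Finset S, f (fun s => if s ∈ T then z s else y s) = f y := by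
    intro T
    induction T using Finset.induction_on with
    | empty => simp
    | insert a T ha ih =>
      rw [← ih, ← hup (fun s => if s ∈ T then z s else y s) a (z a)]
      congr 1
      ext s
      by_cases hs : s = a
      · subst hs; simp
      · simp [hs]
  have := h univ
  simpa using this.symm

theorem wMean_sub {μ : (S → Bool) → ℝ} (f g : (S → Bool) → ℝ) :
    wMean μ (fun y => f y - g y) = wMean μ f - wMean μ g := by
  simp [wMean, mul_sub, Finset.sum_sub_distrib]

theorem wMean_sum {μ : (S → Bool) → ℝ} {ι : Type*} (T : Finset ι)
    (f : ι → (S → Bool) → ℝ) :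
    wMean μ (fun y => ∑ i ∈ T, f i y) = ∑ i ∈ T, wMean μ (f i) := by
  simp only [wMean, Finset.mul_sum]
  exact Finset.sum_comm

theorem wMean_const_mul {μ : (S → Bool) → ℝ} (c : ℝ) (f : (S → Bool) → ℝ) :
    wMean μ (fun y => c * f y) = c * wMean μ f := by
  simp only [wMean, Finset.mul_sum]
  exact Finset.sum_congr rfl fun y _ => by ring

theorem wMean_const {μ : (S → Bool) → ℝ} (h1 : ∑ y, μ y = 1) (c : ℝ) :
    wMean μ (fun _ => c) = c := by
  simp [wMean, ← Finset.sum_mul, h1]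

theorem wMean_mono {μ : (S → Bool) → ℝ} (hμ : ∀ y, 0 < μ y) {f g : (S → Bool) → ℝ}
    (h : ∀ y, f y ≤ g y) : wMean μ f ≤ wMean μ g :=
  Finset.sum_le_sum fun y _ => mul_le_mul_of_nonneg_left (h y) (hμ y).le

theorem abs_wMean_le {μ : (S → Bool) → ℝ} (hμ : ∀ y, 0 < μ y) (f : (S → Bool) → ℝ) :
    |wMean μ f| ≤ wMean μ (fun y => |f y|) := by
  refine (Finset.abs_sum_le_sum_abs _ _).trans (le_of_eq ?_)
  exact Finset.sum_congr rfl fun y _ => by rw [abs_mul, abs_of_pos (hμ y)]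

/-- Second moments decompose into variance and squared bias. -/
theorem wMean_sub_sq {μ : (S → Bool) → ℝ} (h1 : ∑ y, μ y = 1) (f : (S → Bool) → ℝ) (a : ℝ) :
    wMean μ (fun y => (f y - a) ^ 2) =
      wMean μ (fun y => (f y - wMean μ f) ^ 2) + (wMean μ f - a) ^ 2 := by
  have e : ∀ b, wMean μ (fun y => (f y - b) ^ 2) =
      wMean μ (fun y => f y ^ 2) - 2 * b * wMean μ f + b ^ 2 := by
    intro b
    have : b ^ 2 = ∑ y, μ y * b ^ 2 := by rw [← Finset.sum_mul, h1, one_mul]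
    rw [this]
    simp only [wMean, Finset.mul_sum, ← Finset.sum_sub_distrib, ← Finset.sum_add_distrib]
    exact Finset.sum_congr rfl fun y _ => by ring
  rw [e, e]
  ring

theorem wMean_abs_sub_le {μ : (S → Bool) → ℝ} (hμ : ∀ y, 0 < μ y) (h1 : ∑ y, μ y = 1)
    (f : (S → Bool) → ℝ) :
    wMean μ (fun y => |f y - wMean μ f|) ≤ √(wMean μ (fun y => (f y - wMean μ f) ^ 2)) := by
  have h := wMean_sub_sq h1 (fun y => |f y - wMean μ f|) 0
  simp only [sub_zero, sq_abs] at h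
  refine Real.le_sqrt_of_sq_le ?_
  rw [h]
  have : 0 ≤ wMean μ (fun y =>
      (|f y - wMean μ f| - wMean μ (fun y => |f y - wMean μ f|)) ^ 2) :=
    Finset.sum_nonneg fun y _ => mul_nonneg (hμ y).le (sq_nonneg _)
  linarith

/-- The Poincaré inequality in Dobrushin's uniqueness regime. -/
theorem poincare_of_dobrushin {μ : (S → Bool) → ℝ} (hμ : ∀ y, 0 < μ y) (h1 : ∑ y, μ y = 1)
    {R : S → S → ℝ} {θ : ℝ}
    (hR : ∀ s t y, s ≠ t → |discDeriv t (condProb μ s) y| ≤ R s t)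
    (hRsum : ∀ t, ∑ s ∈ univ.erase t, R s t ≤ θ) (f : (S → Bool) → ℝ) :
    (1 - θ) * wMean μ (fun y => (f y - wMean μ f) ^ 2) ≤
      ∑ s, wMean μ (fun y => discDeriv s f y ^ 2) := by
  set c := 1 - θ with hc
  let A : ((S → Bool) → ℝ) →ₗ[ℝ] ((S → Bool) → ℝ) :=
    { toFun := fun f y => ∑ s, (f y - glauber μ s f y) - c * f y + c * wMean μ f
      map_add' := fun f g => by
        ext y
        have : wMean μ (f + g) = wMean μ f + wMean μ g := by
          simp [wMean, mul_add, Finset.sum_add_distrib]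
        have h2 : ∀ s, (f + g) y - glauber μ s (f + g) y =
            (f y - glauber μ s f y) + (g y - glauber μ s g y) := by
          intro s; simp only [glauber, Pi.add_apply]; ring
        simp only [this]
        rw [Finset.sum_congr rfl fun s _ => h2 s, Finset.sum_add_distrib]
        simp only [Pi.add_apply]
        ring
      map_smul' := fun a f => by
        ext y
        have : wMean μ (a • f) = a * wMean μ f := wMean_const_mul a f
        have h2 : ∀ s, (a • f) y - glauber μ s (a • f) y = a * (f y - glauber μ s f y) := by
          intro s; simp only [glauber, Pi.smul_apply, smul_eq_mul]; ring
        simp only [this]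
        rw [Finset.sum_congr rfl fun s _ => h2 s, ← Finset.mul_sum]
        simp only [Pi.smul_apply, smul_eq_mul, RingHom.id_apply]
        ring }
  have hA : ∀ f y, A f y = ∑ s, (f y - glauber μ s f y) - c * f y + c * wMean μ f :=
    fun f y => rfl
  have hform : ∀ f g : (S → Bool) → ℝ, ∑ y, μ y * (f y * A g y) =
      ∑ s, (wMean μ (fun y => f y * g y) - wMean μ (fun y => glauber μ s f y * glauber μ s g y))
        - c * wMean μ (fun y => f y * g y) + c * (wMean μ f * wMean μ g) := by
    intro f g
    have e : ∀ y, μ y * (f y * A g y) =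
        ∑ s, (μ y * (f y * g y) - μ y * (glauber μ s g y * f y)) - c * (μ y * (f y * g y)) +
          c * wMean μ g * (μ y * f y) := by
      intro y
      rw [hA]
      have : ∑ s, (μ y * (f y * g y) - μ y * (glauber μ s g y * f y)) =
          μ y * f y * ∑ s, (g y - glauber μ s g y) := by
        rw [Finset.mul_sum]
        exact Finset.sum_congr rfl fun s _ => by ring
      rw [this]; ring
    rw [Finset.sum_congr rfl fun y _ => e y, Finset.sum_add_distrib, Finset.sum_sub_distrib,
      Finset.sum_comm, ← Finset.mul_sum, ← Finset.mul_sum]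
    have e2 : ∀ s, ∑ y, (μ y * (f y * g y) - μ y * (glauber μ s g y * f y)) =
        wMean μ (fun y => f y * g y) -
          wMean μ (fun y => glauber μ s f y * glauber μ s g y) := by
      intro s
      rw [Finset.sum_sub_distrib]
      change _ - wMean μ (fun y => glauber μ s g y * f y) = _
      rw [wMean_glauber_mul hμ]
      simp only [wMean, mul_comm (glauber μ s g _)]
    rw [Finset.sum_congr rfl fun s _ => e2 s]
    simp only [wMean]
    ring
  have hsymm : ∀ f g : (S → Bool) → ℝ,
      ∑ y, μ y * (f y * A g y) = ∑ y, μ y * (A f y * g y) := by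
    intro f g
    have : ∑ y, μ y * (A f y * g y) = ∑ y, μ y * (g y * A f y) :=
      Finset.sum_congr rfl fun y _ => by ring
    rw [this, hform, hform]
    simp only [mul_comm (f _) (g _), mul_comm (glauber μ _ f _), mul_comm (wMean μ f)]
  have hexpA : ∀ f, wMean μ (A f) = 0 := by
    intro f
    have h2 := hform (fun _ => 1) f
    have h3 : ∀ s y, glauber μ s (fun _ => (1 : ℝ)) y = 1 := fun s y => by simp [glauber]
    simp only [one_mul, h3, wMean_const h1] at h2
    have h4 : ∀ s, wMean μ (fun y => glauber μ s f y) = wMean μ f := wMean_glauber hμ (f := f)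
    simp only [h4, sub_self, Finset.sum_const_zero] at h2
    unfold wMean at h2 ⊢
    linarith
  have heig : ∀ (f : (S → Bool) → ℝ) (lam : ℝ), f ≠ 0 → A f = lam • f → 0 ≤ lam := by
    intro f lam hf0 hf
    by_contra! hneg
    have hE : wMean μ f = 0 := by
      have h2 := hexpA f
      rw [hf] at h2
      have h3 : wMean μ (lam • f) = lam * wMean μ f := wMean_const_mul lam f
      rw [h3] at h2
      exact (mul_eq_zero.1 h2).resolve_left hneg.ne
    have h5 : ∀ y, ∑ s, (f y - glauber μ s f y) = (c + lam) * f y := by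
      intro y
      have h2 := congrFun hf y
      rw [hA, hE] at h2
      simp only [Pi.smul_apply, smul_eq_mul] at h2
      linarith
    have h6 := discDeriv_eq_zero_of_eigen hμ hR hRsum (lam := c + lam) (by linarith) h5
    have h7 := eq_of_discDeriv_eq_zero h6
    apply hf0
    ext y
    have h8 : f = fun _ => f y := funext fun z => h7 z y
    rw [h8, wMean_const h1] at hE
    exact hE
  have hnn := weighted_form_nonneg μ hμ A hsymm heig f
  rw [hform] at hnn
  have hvar : wMean μ (fun y => (f y - wMean μ f) ^ 2) =
      wMean μ (fun y => f y * f y) - wMean μ f * wMean μ f := by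
    have := wMean_sub_sq h1 f 0
    simp only [sub_zero] at this
    simp only [← pow_two]
    linarith
  have hterm : ∀ s, wMean μ (fun y => f y * f y) -
      wMean μ (fun y => glauber μ s f y * glauber μ s f y) ≤
      wMean μ (fun y => discDeriv s f y ^ 2) := by
    intro s
    have h2 : wMean μ (fun y => f y * f y) -
        wMean μ (fun y => glauber μ s f y * glauber μ s f y) =
        wMean μ (fun y => (f y - glauber μ s f y) ^ 2) := by
      have h3 := wMean_glauber_mul hμ s f f
      have h4 : wMean μ (fun y => (f y - glauber μ s f y) ^ 2) =
          wMean μ (fun y => f y * f y) - 2 * wMean μ (fun y => glauber μ s f y * f y) +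
          wMean μ (fun y => glauber μ s f y * glauber μ s f y) := by
        simp only [wMean, Finset.mul_sum, ← Finset.sum_sub_distrib, ← Finset.sum_add_distrib]
        exact Finset.sum_congr rfl fun y _ => by ring
      linarith
    rw [h2]
    refine wMean_mono hμ fun y => ?_
    obtain ⟨hp0, hp1⟩ := condProb_mem_Icc hμ s y
    rw [sq_le_sq]
    unfold glauber discDeriv
    rcases update_self_or s y with e | e
    · have : f y - (condProb μ s y * f (Function.update y s true) +
          (1 - condProb μ s y) * f (Function.update y s false)) =
          (1 - condProb μ s y) *
            (f (Function.update y s true) - f (Function.update y s false)) := by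
        rw [e]; ring
      rw [this, abs_mul, abs_of_nonneg (sub_nonneg.2 hp1)]
      exact mul_le_of_le_one_left (abs_nonneg _) (by linarith)
    · have : f y - (condProb μ s y * f (Function.update y s true) +
          (1 - condProb μ s y) * f (Function.update y s false)) =
          -(condProb μ s y *
            (f (Function.update y s true) - f (Function.update y s false))) := by
        rw [e]; ring
      rw [this, abs_neg, abs_mul, abs_of_nonneg hp0]
      exact mul_le_of_le_one_left (abs_nonneg _) hp1
  have := Finset.sum_le_sum fun s (_ : s ∈ (univ : Finset S)) => hterm s
  rw [hvar]
  linarith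

end SpinSystem

theorem abs_sigmoid_sub_le (x y : ℝ) : |Real.sigmoid x - Real.sigmoid y| ≤ |x - y| / 4 := by
  have h : ∀ z ∈ (Set.univ : Set ℝ), ‖deriv Real.sigmoid z‖ ≤ 1 / 4 := by
    intro z _
    rw [deriv_sigmoid, Real.norm_eq_abs, abs_of_nonneg
      (mul_nonneg (Real.sigmoid_nonneg z) (sub_nonneg.2 (Real.sigmoid_le_one z)))]
    nlinarith [sq_nonneg (Real.sigmoid z - 1 / 2)]
  have := convex_univ.norm_image_sub_le_of_norm_deriv_le
    (fun z _ => differentiable_sigmoid z) h (Set.mem_univ y) (Set.mem_univ x)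
  rw [Real.norm_eq_abs, Real.norm_eq_abs] at this
  linarith

theorem abs_prod_sub_pow_le {S : Type*} {q : S → ℝ} {p Δ : ℝ} (hq0 : ∀ s, 0 ≤ q s)
    (hq1 : ∀ s, q s ≤ 1) (hp0 : 0 ≤ p) (hp1 : p ≤ 1) (hΔ : ∀ s, |q s - p| ≤ Δ) (A : Finset S) :
    |∏ s ∈ A, q s - p ^ A.card| ≤ A.card * Δ := by
  classical
  induction A using Finset.induction_on with
  | empty => simp
  | insert a A ha ih =>
    rw [Finset.prod_insert ha, Finset.card_insert_of_notMem ha]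
    have e : q a * ∏ s ∈ A, q s - p ^ (A.card + 1) =
        q a * (∏ s ∈ A, q s - p ^ A.card) + (q a - p) * p ^ A.card := by ring
    rw [e]
    refine (abs_add_le _ _).trans ?_
    rw [abs_mul, abs_mul, abs_of_nonneg (hq0 a), abs_of_nonneg (pow_nonneg hp0 _)]
    have h1 := mul_le_of_le_one_left (abs_nonneg (∏ s ∈ A, q s - p ^ A.card)) (hq1 a)
    have h2 := mul_le_of_le_one_right (abs_nonneg (q a - p)) (pow_le_one₀ (n := A.card) hp0 hp1)
    push_cast
    linarith [hΔ a]

section Monomials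

variable {S : Type}

/-- The indicator that all spins in `A` are `true`. -/
def allTrue (A : Finset S) (y : S → Bool) : ℝ := if ∀ s ∈ A, y s = true then 1 else 0

theorem allTrue_nonneg (A : Finset S) (y : S → Bool) : 0 ≤ allTrue A y := by
  unfold allTrue; split_ifs <;> norm_num

theorem allTrue_le_one (A : Finset S) (y : S → Bool) : allTrue A y ≤ 1 := by
  unfold allTrue; split_ifs <;> norm_num

variable [DecidableEq S]

theorem allTrue_update_true (A : Finset S) (s : S) (y : S → Bool) :
    allTrue A (Function.update y s true) = allTrue (A.erase s) y := by
  unfold allTrue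
  congr 1
  simp only [eq_iff_iff, Finset.mem_erase, Function.update_apply]
  constructor
  · rintro h t ⟨hts, ht⟩
    simpa [hts] using h t ht
  · intro h t ht
    by_cases hts : t = s
    · simp [hts]
    · simpa [hts] using h t ⟨hts, ht⟩

theorem allTrue_update_of_notMem {A : Finset S} {s : S} (hs : s ∉ A) (y : S → Bool) (b : Bool) :
    allTrue A (Function.update y s b) = allTrue A y := by
  unfold allTrue
  congr 1
  simp only [eq_iff_iff]
  refine forall₂_congr fun t ht => ?_
  have hts : t ≠ s := fun h => hs (by rwa [h] at ht)
  rw [Function.update_of_ne hts]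

theorem allTrue_update_false {A : Finset S} {s : S} (hs : s ∈ A) (y : S → Bool) :
    allTrue A (Function.update y s false) = 0 := by
  unfold allTrue
  rw [if_neg]
  intro h
  simpa using h s hs

theorem discDeriv_allTrue (A : Finset S) (s : S) (y : S → Bool) :
    discDeriv s (allTrue A) y = if s ∈ A then allTrue (A.erase s) y else 0 := by
  unfold discDeriv
  split_ifs with h
  · rw [allTrue_update_true, allTrue_update_false h, sub_zero]
  · rw [allTrue_update_of_notMem h, allTrue_update_of_notMem h, sub_self]

theorem abs_discDeriv_allTrue_le (A : Finset S) (s : S) (y : S → Bool) :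
    |discDeriv s (allTrue A) y| ≤ if s ∈ A then 1 else 0 := by
  rw [discDeriv_allTrue]
  split_ifs
  · rw [abs_of_nonneg (allTrue_nonneg _ _)]
    exact allTrue_le_one _ _
  · simp

theorem discDeriv_sum {ι : Type*} (T : Finset ι) (f : ι → (S → Bool) → ℝ) (s : S)
    (y : S → Bool) :
    discDeriv s (fun y => ∑ i ∈ T, f i y) y = ∑ i ∈ T, discDeriv s (f i) y := by
  simp [discDeriv, Finset.sum_sub_distrib]

variable {ι : Type} [Fintype ι]

/-- The number of members of the family `A` all of whose spins are `true`. -/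
def famCount (A : ι → Finset S) (y : S → Bool) : ℝ := ∑ i, allTrue (A i) y

/-- The number of members of the family `A` containing `s`. -/
def famDeg (A : ι → Finset S) (s : S) : ℕ := #{i | s ∈ A i}

/-- The number of members of the family `A` containing both `s` and `t`. -/
def famCodeg (A : ι → Finset S) (s t : S) : ℕ := #{i | s ∈ A i ∧ t ∈ A i}

theorem famCodeg_comm (A : ι → Finset S) (s t : S) : famCodeg A s t = famCodeg A t s := by
  simp only [famCodeg, and_comm]

theorem discDeriv_famCount (A : ι → Finset S) (s : S) (y : S → Bool) :
    discDeriv s (famCount A) y = ∑ i with s ∈ A i, allTrue ((A i).erase s) y := by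
  unfold famCount
  rw [discDeriv_sum, Finset.sum_filter]
  exact Finset.sum_congr rfl fun i _ => discDeriv_allTrue _ _ _

theorem abs_discDeriv_discDeriv_famCount_le (A : ι → Finset S) {s t : S} (hst : s ≠ t)
    (y : S → Bool) : |discDeriv t (discDeriv s (famCount A)) y| ≤ famCodeg A s t := by
  have h : discDeriv s (famCount A) = fun y => ∑ i with s ∈ A i, allTrue ((A i).erase s) y :=
    funext fun y => discDeriv_famCount A s y
  rw [h, discDeriv_sum]
  refine (Finset.abs_sum_le_sum_abs _ _).trans ?_
  refine (Finset.sum_le_sum fun i _ => abs_discDeriv_allTrue_le _ _ _).trans (le_of_eq ?_)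
  rw [Finset.sum_boole, famCodeg, Finset.filter_filter]
  simp [hst.symm]

theorem discDeriv_discDeriv_self (f : (S → Bool) → ℝ) (s : S) (y : S → Bool) :
    discDeriv s (discDeriv s f) y = 0 := by
  simp [discDeriv]

variable [Fintype S]

theorem sum_famCodeg {A : ι → Finset S} {e : ℕ} (hA : ∀ i, (A i).card = e) (s : S) :
    ∑ t ∈ univ.erase s, (famCodeg A s t : ℝ) = ((e : ℝ) - 1) * famDeg A s := by
  have h1 : ∀ t, (famCodeg A s t : ℝ) = ∑ i with s ∈ A i, if t ∈ A i then 1 else 0 := by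
    intro t
    rw [Finset.sum_boole, famCodeg, Finset.filter_filter]
  simp only [h1]
  rw [Finset.sum_comm]
  have h2 : ∀ i ∈ ({i | s ∈ A i} : Finset ι),
      ∑ t ∈ univ.erase s, (if t ∈ A i then (1 : ℝ) else 0) = (e : ℝ) - 1 := by
    intro i hi
    have hs : s ∈ A i := (Finset.mem_filter.1 hi).2
    have h3 := Finset.add_sum_erase univ (fun t => if t ∈ A i then (1 : ℝ) else 0) (mem_univ s)
    simp only [hs, if_true] at h3
    have h4 : ∑ t, (if t ∈ A i then (1 : ℝ) else 0) = e := by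
      rw [Finset.sum_boole, ← hA i]
      congr 2
      ext
      simp
    linarith
  rw [Finset.sum_congr rfl h2, Finset.sum_const, nsmul_eq_mul, famDeg]
  ring

/-- A family of `e`-element sets in which every site has degree approximately `2 e r` up to a
relative error `O(1 / ν)`, and in which the codegrees are smaller by a factor `ν`. -/
structure IsUniformFamily (A : ι → Finset S) (e : ℕ) (r ν D : ℝ) : Prop where
  one_le : 1 ≤ e
  scale_pos : 0 < r
  err_nonneg : 0 ≤ D
  card_eq : ∀ i, (A i).card = e
  deg_le : ∀ s, (famDeg A s : ℝ) ≤ 2 * e * r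
  le_deg : ∀ s, 2 * e * r - D * r / ν ≤ famDeg A s
  codeg_le : ∀ s t, s ≠ t → (famCodeg A s t : ℝ) ≤ D * r / ν

end Monomials

section Gibbs

variable {S : Type} [DecidableEq S] [Fintype S] {J : Type} [Fintype J] {ι : J → Type}
  [∀ j, Fintype (ι j)]

/-- A Gibbs measure whose energy is a combination of normalized counts of uniform families, with
coefficients in Dobrushin's uniqueness regime. -/
structure IsDobrushinGibbs (μ : (S → Bool) → ℝ) (β : J → ℝ) (A : ∀ j, ι j → Finset S)
    (e : J → ℕ) (r : J → ℝ) (ν : ℝ) (D : J → ℝ) (θ : ℝ) : Prop where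
  pos : ∀ y, 0 < μ y
  sum_eq_one : ∑ y, μ y = 1
  condProb_eq : ∀ s y, condProb μ s y =
    Real.sigmoid (∑ j, β j / r j * discDeriv s (famCount (A j)) y)
  family : ∀ j, IsUniformFamily (A j) (e j) (r j) ν (D j)
  one_le : 1 ≤ ν
  lt_one : θ < 1
  influence_le : ∑ j, |β j| * (e j * ((e j : ℝ) - 1)) ≤ 2 * θ

/-- The normalized variance bound for the discrete derivative of a family count. -/
def derivVar (e : ℕ) (D θ : ℝ) : ℝ := 2 * (e : ℝ) ^ 2 * D / (1 - θ)

/-- The rate of concentration of the conditional probabilities. -/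
def condRate (β : J → ℝ) (e : J → ℕ) (D : J → ℝ) (θ : ℝ) : ℝ :=
  ∑ j, |β j| * √(derivVar (e j) (D j) θ)

/-- The rate of convergence of the edge densities. -/
def densityRate (β : J → ℝ) (e : J → ℕ) (D : J → ℝ) (θ : ℝ) : ℝ :=
  (condRate β e D θ + ∑ j, |β j| * (4 * (e j : ℝ) ^ 2 * condRate β e D θ + D j)) / (1 - θ)

namespace IsDobrushinGibbs

variable {μ : (S → Bool) → ℝ} {β : J → ℝ} {A : ∀ j, ι j → Finset S}
    {e : J → ℕ} {r : J → ℝ} {ν : ℝ} {D : J → ℝ} {θ : ℝ}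

theorem discDeriv_condProb_le (h : IsDobrushinGibbs μ β A e r ν D θ) {s t : S} (hst : s ≠ t)
    (y : S → Bool) : |discDeriv t (condProb μ s) y| ≤
      (∑ j, |β j| / r j * famCodeg (A j) s t) / 4 := by
  have e1 : discDeriv t (condProb μ s) y = Real.sigmoid
      (∑ j, β j / r j * discDeriv s (famCount (A j)) (Function.update y t true)) -
      Real.sigmoid
      (∑ j, β j / r j * discDeriv s (famCount (A j)) (Function.update y t false)) := by
    rw [discDeriv, h.condProb_eq, h.condProb_eq]
  rw [e1]
  refine (abs_sigmoid_sub_le _ _).trans ?_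
  rw [← Finset.sum_sub_distrib]
  gcongr
  refine (Finset.abs_sum_le_sum_abs _ _).trans (Finset.sum_le_sum fun j _ => ?_)
  rw [← mul_sub, abs_mul, abs_div, abs_of_pos (h.family j).scale_pos]
  have hr := (h.family j).scale_pos
  exact mul_le_mul_of_nonneg_left (abs_discDeriv_discDeriv_famCount_le (A j) hst y)
    (by positivity)

theorem poincare (h : IsDobrushinGibbs μ β A e r ν D θ) (f : (S → Bool) → ℝ) :
    wMean μ (fun y => (f y - wMean μ f) ^ 2) ≤
      (∑ s, wMean μ (fun y => discDeriv s f y ^ 2)) / (1 - θ) := by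
  rw [le_div_iff₀ (sub_pos.2 h.lt_one), mul_comm]
  refine poincare_of_dobrushin h.pos h.sum_eq_one
    (fun s t y hst => h.discDeriv_condProb_le hst y) ?_ f
  intro t
  rw [← Finset.sum_div, Finset.sum_comm]
  have h1 : ∀ j, ∑ s ∈ univ.erase t, |β j| / r j * (famCodeg (A j) s t : ℝ) ≤
      2 * (|β j| * (e j * ((e j : ℝ) - 1))) := by
    intro j
    have hr := (h.family j).scale_pos
    rw [← Finset.mul_sum]
    simp only [famCodeg_comm (A j) _ t]
    rw [sum_famCodeg (h.family j).card_eq]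
    have he : (0 : ℝ) ≤ (e j : ℝ) - 1 := by
      have : (1 : ℝ) ≤ e j := by exact_mod_cast (h.family j).one_le
      linarith
    have := mul_le_mul_of_nonneg_left ((h.family j).deg_le t) he
    calc |β j| / r j * (((e j : ℝ) - 1) * famDeg (A j) t)
        ≤ |β j| / r j * (((e j : ℝ) - 1) * (2 * e j * r j)) := by gcongr
      _ = _ := by field_simp
  have h2 := Finset.sum_le_sum fun j (_ : j ∈ (univ : Finset J)) => h1 j
  rw [← Finset.mul_sum] at h2
  linarith [h.influence_le]

variable {κ : Type} [Fintype κ] {B : κ → Finset S} {b : ℕ} {ρ E : ℝ}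

theorem variance_discDeriv_le (h : IsDobrushinGibbs μ β A e r ν D θ)
    (hB : IsUniformFamily B b ρ ν E) (s : S) :
    wMean μ (fun y => (discDeriv s (famCount B) y - wMean μ (discDeriv s (famCount B))) ^ 2) ≤
      derivVar b E θ * (ρ ^ 2 / ν) := by
  have hθ := sub_pos.2 h.lt_one
  have hν : 0 < ν := lt_of_lt_of_le one_pos h.one_le
  have hρ := hB.scale_pos
  have hE := hB.err_nonneg
  refine (h.poincare _).trans ?_
  have key : ∑ t, wMean μ (fun y => discDeriv t (discDeriv s (famCount B)) y ^ 2) ≤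
      2 * (b : ℝ) ^ 2 * E * (ρ ^ 2 / ν) := by
    rw [← Finset.add_sum_erase _ _ (mem_univ s)]
    simp only [discDeriv_discDeriv_self]
    have h0 : wMean μ (fun _ => (0 : ℝ) ^ 2) = 0 := by simp [wMean]
    rw [h0, zero_add]
    have h1 : ∀ t ∈ univ.erase s,
        wMean μ (fun y => discDeriv t (discDeriv s (famCount B)) y ^ 2) ≤
        E * ρ / ν * famCodeg B s t := by
      intro t ht
      have hst : s ≠ t := (Finset.ne_of_mem_erase ht).symm
      refine (wMean_mono h.pos (g := fun _ => (famCodeg B s t : ℝ) ^ 2) fun y => ?_).trans ?_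
      · have := abs_discDeriv_discDeriv_famCount_le B hst y
        exact sq_le_sq' (abs_le.1 this).1 (abs_le.1 this).2
      · rw [wMean_const h.sum_eq_one, pow_two]
        exact mul_le_mul_of_nonneg_right (hB.codeg_le s t hst) (Nat.cast_nonneg _)
    refine (Finset.sum_le_sum h1).trans ?_
    rw [← Finset.mul_sum, sum_famCodeg hB.card_eq]
    have hb : (0 : ℝ) ≤ (b : ℝ) - 1 := by
      have : (1 : ℝ) ≤ b := by exact_mod_cast hB.one_le
      linarith
    have h3 : ((b : ℝ) - 1) * famDeg B s ≤ b * (2 * b * ρ) :=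
      mul_le_mul (by linarith) (hB.deg_le s) (Nat.cast_nonneg _) (Nat.cast_nonneg _)
    calc E * ρ / ν * (((b : ℝ) - 1) * famDeg B s) ≤ E * ρ / ν * (b * (2 * b * ρ)) := by gcongr
      _ = _ := by ring
  calc _ ≤ 2 * (b : ℝ) ^ 2 * E * (ρ ^ 2 / ν) / (1 - θ) := by gcongr
    _ = _ := by unfold derivVar; ring

theorem mean_abs_discDeriv_le (h : IsDobrushinGibbs μ β A e r ν D θ)
    (hB : IsUniformFamily B b ρ ν E) (s : S) :
    wMean μ (fun y => |discDeriv s (famCount B) y - wMean μ (discDeriv s (famCount B))|) ≤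
      √(derivVar b E θ) * ρ * √(1 / ν) := by
  refine (wMean_abs_sub_le h.pos h.sum_eq_one _).trans ?_
  refine (Real.sqrt_le_sqrt (h.variance_discDeriv_le hB s)).trans (le_of_eq ?_)
  have hθ := sub_pos.2 h.lt_one
  have hE := hB.err_nonneg
  rw [Real.sqrt_mul (by unfold derivVar; positivity), div_eq_mul_one_div (ρ ^ 2),
    Real.sqrt_mul (sq_nonneg _), Real.sqrt_sq hB.scale_pos.le, mul_assoc]

theorem condRate_nonneg (β : J → ℝ) (e : J → ℕ) (D : J → ℝ) (θ : ℝ) :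
    0 ≤ condRate β e D θ :=
  Finset.sum_nonneg fun _ _ => mul_nonneg (abs_nonneg _) (Real.sqrt_nonneg _)

theorem wMean_abs_condProb_sub_sigmoid_le (h : IsDobrushinGibbs μ β A e r ν D θ) (s : S) :
    wMean μ (fun y => |condProb μ s y -
      Real.sigmoid (∑ j, β j / r j * wMean μ (discDeriv s (famCount (A j))))|) ≤
      condRate β e D θ * √(1 / ν) := by
  have h1 : ∀ y, |condProb μ s y -
      Real.sigmoid (∑ j, β j / r j * wMean μ (discDeriv s (famCount (A j))))| ≤
      ∑ j, |β j| / r j *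
        |discDeriv s (famCount (A j)) y - wMean μ (discDeriv s (famCount (A j)))| := by
    intro y
    rw [h.condProb_eq]
    refine (abs_sigmoid_sub_le _ _).trans ((div_le_self (abs_nonneg _) (by norm_num)).trans ?_)
    rw [← Finset.sum_sub_distrib]
    refine (Finset.abs_sum_le_sum_abs _ _).trans (le_of_eq ?_)
    refine Finset.sum_congr rfl fun j _ => ?_
    rw [← mul_sub, abs_mul, abs_div, abs_of_pos (h.family j).scale_pos]
  refine (wMean_mono h.pos h1).trans ?_
  rw [wMean_sum, condRate, Finset.sum_mul]
  refine Finset.sum_le_sum fun j _ => ?_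
  rw [wMean_const_mul]
  have hr := (h.family j).scale_pos
  calc _ ≤ |β j| / r j * (√(derivVar (e j) (D j) θ) * r j * √(1 / ν)) := by
        gcongr
        exact h.mean_abs_discDeriv_le (h.family j) s
    _ = _ := by field_simp

theorem abs_mean_condProb_sub_sigmoid_le (h : IsDobrushinGibbs μ β A e r ν D θ) (s : S) :
    |wMean μ (condProb μ s) -
      Real.sigmoid (∑ j, β j / r j * wMean μ (discDeriv s (famCount (A j))))| ≤
      condRate β e D θ * √(1 / ν) := by
  refine le_trans ?_ (h.wMean_abs_condProb_sub_sigmoid_le s)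
  refine le_trans (le_of_eq ?_) (abs_wMean_le h.pos _)
  rw [wMean_sub, wMean_const h.sum_eq_one]

theorem wMean_abs_condProb_sub_mean_le (h : IsDobrushinGibbs μ β A e r ν D θ) (s : S) :
    wMean μ (fun y => |condProb μ s y - wMean μ (condProb μ s)|) ≤
      2 * condRate β e D θ * √(1 / ν) := by
  set c := Real.sigmoid (∑ j, β j / r j * wMean μ (discDeriv s (famCount (A j))))
  have h1 := h.wMean_abs_condProb_sub_sigmoid_le s
  have h2 := h.abs_mean_condProb_sub_sigmoid_le s
  have h3 : wMean μ (fun y => |condProb μ s y - wMean μ (condProb μ s)|) ≤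
      wMean μ (fun y => |condProb μ s y - c| - -|wMean μ (condProb μ s) - c|) := by
    refine wMean_mono h.pos fun y => ?_
    rw [sub_neg_eq_add, abs_sub_comm (wMean μ (condProb μ s))]
    exact abs_sub_le _ _ _
  rw [wMean_sub, wMean_const h.sum_eq_one] at h3
  linarith

theorem wMean_allTrue_insert (h : IsDobrushinGibbs μ β A e r ν D θ) {T : Finset S} {s : S}
    (hs : s ∉ T) :
    wMean μ (allTrue (insert s T)) = wMean μ (fun y => condProb μ s y * allTrue T y) := by
  rw [← wMean_glauber h.pos s]
  congr 1
  ext y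
  rw [glauber, allTrue_update_true, Finset.erase_insert hs,
    allTrue_update_false (Finset.mem_insert_self _ _), mul_zero, add_zero]

theorem abs_mean_allTrue_sub_prod_le (h : IsDobrushinGibbs μ β A e r ν D θ) (T : Finset S) :
    |wMean μ (allTrue T) - ∏ s ∈ T, wMean μ (condProb μ s)| ≤
      T.card * (2 * condRate β e D θ * √(1 / ν)) := by
  induction T using Finset.induction_on with
  | empty =>
    have : (allTrue (∅ : Finset S)) = fun _ => 1 := by ext y; simp [allTrue]
    simp [this, wMean_const h.sum_eq_one]
  | insert s T hs ih =>
    rw [Finset.prod_insert hs, Finset.card_insert_of_notMem hs, h.wMean_allTrue_insert hs]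
    set q := wMean μ (condProb μ s) with hq
    have hq0 : 0 ≤ q :=
      Finset.sum_nonneg fun y _ => mul_nonneg (h.pos y).le (condProb_mem_Icc h.pos s y).1
    have hq1 : q ≤ 1 := by
      rw [← wMean_const h.sum_eq_one 1]
      exact wMean_mono h.pos fun y => (condProb_mem_Icc h.pos s y).2
    have e1 : wMean μ (fun y => condProb μ s y * allTrue T y) =
        wMean μ (fun y => (condProb μ s y - q) * allTrue T y) + q * wMean μ (allTrue T) := by
      have : ∀ y, (condProb μ s y - q) * allTrue T y =
          condProb μ s y * allTrue T y - q * allTrue T y := fun y => sub_mul _ _ _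
      simp only [this]
      rw [wMean_sub, wMean_const_mul]
      ring
    have h2 : |wMean μ (fun y => (condProb μ s y - q) * allTrue T y)| ≤
        2 * condRate β e D θ * √(1 / ν) := by
      refine (abs_wMean_le h.pos _).trans
        (le_trans ?_ (h.wMean_abs_condProb_sub_mean_le s))
      refine wMean_mono h.pos fun y => ?_
      rw [abs_mul, abs_of_nonneg (allTrue_nonneg _ _)]
      exact mul_le_of_le_one_right (abs_nonneg _) (allTrue_le_one _ _)
    have e2 : wMean μ (fun y => condProb μ s y * allTrue T y) -
        q * ∏ s ∈ T, wMean μ (condProb μ s) =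
        wMean μ (fun y => (condProb μ s y - q) * allTrue T y) +
        q * (wMean μ (allTrue T) - ∏ s ∈ T, wMean μ (condProb μ s)) := by
      rw [e1]; ring
    rw [e2]
    refine (abs_add_le _ _).trans ?_
    rw [abs_mul, abs_of_nonneg hq0]
    have h3 := mul_le_of_le_one_left
      (abs_nonneg (wMean μ (allTrue T) - ∏ s ∈ T, wMean μ (condProb μ s))) hq1
    push_cast
    linarith

theorem abs_mean_discDeriv_sub_le (h : IsDobrushinGibbs μ β A e r ν D θ)
    (hB : IsUniformFamily B b ρ ν E) {p Δ : ℝ} (hp0 : 0 ≤ p) (hp1 : p ≤ 1)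
    (hΔ : ∀ s, |wMean μ (condProb μ s) - p| ≤ Δ) (s : S) :
    |wMean μ (discDeriv s (famCount B)) - 2 * b * ρ * p ^ (b - 1)| ≤
      ρ * (2 * (b * ((b : ℝ) - 1)) * Δ +
        (4 * (b : ℝ) ^ 2 * condRate β e D θ + E) * √(1 / ν)) := by
  have hν : 0 < ν := lt_of_lt_of_le one_pos h.one_le
  have hρ := hB.scale_pos
  have hE := hB.err_nonneg
  have hK := condRate_nonneg β e D θ
  have hΔ0 : 0 ≤ Δ := (abs_nonneg _).trans (hΔ s)
  have hb : (1 : ℝ) ≤ b := by exact_mod_cast hB.one_le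
  have hcast : ((b - 1 : ℕ) : ℝ) = (b : ℝ) - 1 := by rw [Nat.cast_sub hB.one_le, Nat.cast_one]
  set ε := √(1 / ν) with hε
  have hε0 : 0 ≤ ε := Real.sqrt_nonneg _
  have hνε : 1 / ν ≤ ε := by
    refine Real.le_sqrt_of_sq_le ?_
    have : 1 / ν ≤ 1 := (div_le_one hν).2 h.one_le
    have h0 : 0 ≤ 1 / ν := by positivity
    nlinarith
  have hq0 : ∀ s, 0 ≤ wMean μ (condProb μ s) := fun s =>
    Finset.sum_nonneg fun y _ => mul_nonneg (h.pos y).le (condProb_mem_Icc h.pos s y).1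
  have hq1 : ∀ s, wMean μ (condProb μ s) ≤ 1 := by
    intro s
    rw [← wMean_const h.sum_eq_one 1]
    exact wMean_mono h.pos fun y => (condProb_mem_Icc h.pos s y).2
  have e1 : discDeriv s (famCount B) = fun y => ∑ i with s ∈ B i, allTrue ((B i).erase s) y :=
    funext fun y => discDeriv_famCount B s y
  have h1 : ∀ i ∈ ({i | s ∈ B i} : Finset κ),
      |wMean μ (allTrue ((B i).erase s)) - p ^ (b - 1)| ≤
        ((b : ℝ) - 1) * (2 * condRate β e D θ * ε + Δ) := by
    intro i hi
    have hc : ((B i).erase s).card = b - 1 := by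
      rw [Finset.card_erase_of_mem (Finset.mem_filter.1 hi).2, hB.card_eq]
    have h2 := h.abs_mean_allTrue_sub_prod_le ((B i).erase s)
    have h3 := abs_prod_sub_pow_le hq0 hq1 hp0 hp1 hΔ ((B i).erase s)
    rw [hc, hcast] at h2 h3
    have := abs_sub_le (wMean μ (allTrue ((B i).erase s)))
      (∏ s ∈ (B i).erase s, wMean μ (condProb μ s)) (p ^ (b - 1))
    linarith
  have h2 : |wMean μ (discDeriv s (famCount B)) - famDeg B s * p ^ (b - 1)| ≤
      (2 * b * ρ) * (((b : ℝ) - 1) * (2 * condRate β e D θ * ε + Δ)) := by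
    have e2 : (famDeg B s : ℝ) * p ^ (b - 1) = ∑ i with s ∈ B i, p ^ (b - 1) := by
      rw [Finset.sum_const, nsmul_eq_mul, famDeg]
    rw [e1, wMean_sum, e2, ← Finset.sum_sub_distrib]
    refine (Finset.abs_sum_le_sum_abs _ _).trans ((Finset.sum_le_sum h1).trans ?_)
    rw [Finset.sum_const, nsmul_eq_mul]
    have h0 : 0 ≤ ((b : ℝ) - 1) * (2 * condRate β e D θ * ε + Δ) :=
      mul_nonneg (by linarith) (by positivity)
    exact mul_le_mul_of_nonneg_right (hB.deg_le s) h0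
  have h3 : |(famDeg B s : ℝ) * p ^ (b - 1) - 2 * b * ρ * p ^ (b - 1)| ≤ E * ρ * ε := by
    rw [← sub_mul, abs_mul, abs_of_nonneg (pow_nonneg hp0 _)]
    refine (mul_le_of_le_one_right (abs_nonneg _) (pow_le_one₀ hp0 hp1)).trans ?_
    have h4 : E * ρ / ν ≤ E * ρ * ε := by
      rw [div_eq_mul_one_div]; gcongr
    rw [abs_sub_comm, abs_of_nonneg (sub_nonneg.2 (hB.deg_le s))]
    linarith [hB.le_deg s]
  have h4 := abs_sub_le (wMean μ (discDeriv s (famCount B))) (famDeg B s * p ^ (b - 1))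
    (2 * b * ρ * p ^ (b - 1))
  refine h4.trans ((add_le_add h2 h3).trans ?_)
  have h5 : 0 ≤ ρ * (b * (condRate β e D θ * ε)) := by positivity
  nlinarith

/-- Edge densities converge to the fixed point of the mean-field equation. -/
theorem abs_mean_condProb_sub_le (h : IsDobrushinGibbs μ β A e r ν D θ) {p : ℝ} (hp0 : 0 ≤ p)
    (hp1 : p ≤ 1) (hfix : Real.sigmoid (2 * ∑ j, β j * e j * p ^ (e j - 1)) = p) (s : S) :
    |wMean μ (condProb μ s) - p| ≤ densityRate β e D θ * √(1 / ν) := by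
  have hθ := sub_pos.2 h.lt_one
  obtain ⟨t, -, ht⟩ := Finset.exists_max_image (univ : Finset S)
    (fun s => |wMean μ (condProb μ s) - p|) ⟨s, mem_univ s⟩
  set Δ := |wMean μ (condProb μ t) - p| with hΔdef
  have hΔ : ∀ s, |wMean μ (condProb μ s) - p| ≤ Δ := fun s => ht s (mem_univ s)
  have hΔ0 : 0 ≤ Δ := abs_nonneg _
  set ε := √(1 / ν) with hε
  have hε0 : 0 ≤ ε := Real.sqrt_nonneg _
  set K := condRate β e D θ with hKdef
  have h1 := h.abs_mean_condProb_sub_sigmoid_le t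
  have h2 : |Real.sigmoid (∑ j, β j / r j * wMean μ (discDeriv t (famCount (A j)))) - p| ≤
      θ * Δ + (∑ j, |β j| * (4 * (e j : ℝ) ^ 2 * K + D j)) * ε := by
    conv_lhs => rw [← hfix]
    refine (abs_sigmoid_sub_le _ _).trans ?_
    rw [Finset.mul_sum, ← Finset.sum_sub_distrib]
    have h3 : ∀ j, |β j / r j * wMean μ (discDeriv t (famCount (A j))) -
        2 * (β j * e j * p ^ (e j - 1))| ≤
        2 * Δ * (|β j| * (e j * ((e j : ℝ) - 1))) +
          (|β j| * (4 * (e j : ℝ) ^ 2 * K + D j)) * ε := by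
      intro j
      have hr := (h.family j).scale_pos
      have e3 : β j / r j * wMean μ (discDeriv t (famCount (A j))) -
          2 * (β j * e j * p ^ (e j - 1)) =
          β j / r j * (wMean μ (discDeriv t (famCount (A j))) -
            2 * e j * r j * p ^ (e j - 1)) := by
        field_simp
      rw [e3, abs_mul, abs_div, abs_of_pos hr]
      calc _ ≤ |β j| / r j * (r j * (2 * (e j * ((e j : ℝ) - 1)) * Δ +
            (4 * (e j : ℝ) ^ 2 * K + D j) * ε)) := by
            gcongr
            exact h.abs_mean_discDeriv_sub_le (h.family j) hp0 hp1 hΔ t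
        _ = _ := by field_simp
    have h4 := (Finset.abs_sum_le_sum_abs (fun j => β j / r j *
      wMean μ (discDeriv t (famCount (A j))) - 2 * (β j * e j * p ^ (e j - 1))) univ).trans
        (Finset.sum_le_sum fun j _ => h3 j)
    rw [Finset.sum_add_distrib, ← Finset.mul_sum, ← Finset.sum_mul] at h4
    have h5 := mul_le_mul_of_nonneg_left h.influence_le hΔ0
    have h6 : 0 ≤ (∑ j, |β j| * (4 * (e j : ℝ) ^ 2 * K + D j)) * ε := by
      refine mul_nonneg (Finset.sum_nonneg fun j _ => ?_) hε0
      have := (h.family j).err_nonneg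
      have hK := condRate_nonneg β e D θ
      positivity
    linarith
  have h3 := abs_sub_le (wMean μ (condProb μ t))
    (Real.sigmoid (∑ j, β j / r j * wMean μ (discDeriv t (famCount (A j))))) p
  refine (hΔ s).trans ?_
  rw [densityRate, div_mul_eq_mul_div, le_div_iff₀ hθ, add_mul]
  linarith

/-- The variance of a family count, corrected by its first-order projection on the sum of the
spins, is of lower order. -/
theorem variance_famCount_sub_le (h : IsDobrushinGibbs μ β A e r ν D θ)
    (hB : IsUniformFamily B b ρ ν E) {p : ℝ} (hp0 : 0 ≤ p) (hp1 : p ≤ 1)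
    (hfix : Real.sigmoid (2 * ∑ j, β j * e j * p ^ (e j - 1)) = p) (g : (S → Bool) → ℝ)
    (hg : ∀ s y, discDeriv s g y =
      discDeriv s (famCount B) y - 2 * b * ρ * p ^ (b - 1)) :
    wMean μ (fun y => (g y - wMean μ g) ^ 2) ≤
      (derivVar b E θ + (2 * (b * ((b : ℝ) - 1)) * densityRate β e D θ +
        (4 * (b : ℝ) ^ 2 * condRate β e D θ + E)) ^ 2) / (1 - θ) *
        (Fintype.card S * ρ ^ 2 / ν) := by
  have hθ := sub_pos.2 h.lt_one
  have hν : 0 < ν := lt_of_lt_of_le one_pos h.one_le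
  set L := 2 * (b * ((b : ℝ) - 1)) * densityRate β e D θ +
        (4 * (b : ℝ) ^ 2 * condRate β e D θ + E) with hL
  refine (h.poincare g).trans ?_
  have h1 : ∀ s, wMean μ (fun y => discDeriv s g y ^ 2) ≤
      (derivVar b E θ + L ^ 2) * (ρ ^ 2 / ν) := by
    intro s
    simp only [hg]
    rw [wMean_sub_sq h.sum_eq_one]
    have h2 := h.variance_discDeriv_le hB s
    have h3 := h.abs_mean_discDeriv_sub_le hB hp0 hp1
      (h.abs_mean_condProb_sub_le hp0 hp1 hfix) s
    have h4 : (wMean μ (discDeriv s (famCount B)) - 2 * b * ρ * p ^ (b - 1)) ^ 2 ≤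
        (ρ * L * √(1 / ν)) ^ 2 := by
      refine sq_le_sq' ?_ ?_
      · have := (abs_le.1 h3).1
        rw [hL]; linarith
      · have := (abs_le.1 h3).2
        rw [hL]; linarith
    have h5 : (ρ * L * √(1 / ν)) ^ 2 = L ^ 2 * (ρ ^ 2 / ν) := by
      rw [mul_pow, Real.sq_sqrt (by positivity)]; ring
    rw [h5] at h4
    linarith
  have h2 := Finset.sum_le_sum fun s (_ : s ∈ (univ : Finset S)) => h1 s
  rw [Finset.sum_const, nsmul_eq_mul, Finset.card_univ] at h2
  rw [div_le_iff₀ hθ]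
  refine h2.trans (le_of_eq ?_)
  field_simp

end IsDobrushinGibbs

end Gibbs

section Graphs

open scoped Classical in
/-- The set of edges of the complete graph on `n` vertices that are images of edges of `H` under
the embedding `φ`. -/
def homEdges {v n : ℕ} (H : SimpleGraph (Fin v)) (φ : Fin v ↪ Fin n) : Finset (EdgeIdx n) :=
  {s | ∃ a b, H.Adj a b ∧ φ a = s.1.1 ∧ φ b = s.1.2}

theorem mem_homEdges {v n : ℕ} {H : SimpleGraph (Fin v)} {φ : Fin v ↪ Fin n} {s : EdgeIdx n} :
    s ∈ homEdges H φ ↔ ∃ a b, H.Adj a b ∧ φ a = s.1.1 ∧ φ b = s.1.2 := by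
  classical
  simp [homEdges]

theorem yAdj_of_lt {n : ℕ} (y : EdgeIdx n → Bool) {a b : Fin n} (h : a < b) :
    yAdj y a b = y ⟨(a, b), h⟩ := by
  simp [yAdj, h]

theorem yAdj_comm {n : ℕ} (y : EdgeIdx n → Bool) (a b : Fin n) : yAdj y a b = yAdj y b a := by
  rcases lt_trichotomy a b with h | h | h
  · simp [yAdj, h, h.not_gt]
  · simp [h]
  · simp [yAdj, h, h.not_gt]

theorem forall_homEdges_iff {v n : ℕ} (H : SimpleGraph (Fin v)) (φ : Fin v ↪ Fin n)
    (y : EdgeIdx n → Bool) : (∀ s ∈ homEdges H φ, y s = true) ↔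
      ∀ a b, H.Adj a b → yAdj y (φ a) (φ b) = true := by
  constructor
  · intro h a b hab
    rcases lt_trichotomy (φ a) (φ b) with hlt | heq | hlt
    · rw [yAdj_of_lt y hlt]
      exact h _ (mem_homEdges.2 ⟨a, b, hab, rfl, rfl⟩)
    · exact absurd (φ.injective heq) hab.ne
    · rw [yAdj_comm, yAdj_of_lt y hlt]
      exact h _ (mem_homEdges.2 ⟨b, a, hab.symm, rfl, rfl⟩)
  · intro h s hs
    obtain ⟨a, b, hab, ha, hb⟩ := mem_homEdges.1 hs
    have := h a b hab
    rw [ha, hb, yAdj_of_lt y s.2] at this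
    exact this

theorem homCount_eq_famCount {v n : ℕ} (H : SimpleGraph (Fin v)) (y : EdgeIdx n → Bool) :
    (homCount H y : ℝ) = famCount (homEdges H (n := n)) y := by
  classical
  have h1 : homCount H y =
      Nat.card {φ : Fin v ↪ Fin n // ∀ s ∈ homEdges H φ, y s = true} := by
    refine Nat.card_congr
      { toFun := fun φ => ⟨⟨φ.1, φ.2.1⟩, (forall_homEdges_iff H _ y).2 φ.2.2⟩
        invFun := fun φ => ⟨φ.1, φ.1.injective, (forall_homEdges_iff H _ y).1 φ.2⟩
        left_inv := fun φ => rfl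
        right_inv := fun φ => rfl }
  rw [h1, Nat.card_eq_fintype_card, Fintype.card_subtype, Finset.card_filter, Nat.cast_sum]
  refine Finset.sum_congr rfl fun φ _ => ?_
  rw [allTrue]
  split_ifs <;> simp

theorem card_homEdges {v n : ℕ} (H : SimpleGraph (Fin v)) (φ : Fin v ↪ Fin n) :
    (homEdges H φ).card = eCount H := by
  classical
  have hinj : Function.Injective (fun s : EdgeIdx n => s(s.1.1, s.1.2)) := by
    intro s t hst
    rcases Sym2.eq_iff.1 hst with ⟨h1, h2⟩ | ⟨h1, h2⟩
    · exact Subtype.ext (Prod.ext h1 h2)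
    · have h3 := s.2
      have h4 := t.2
      rw [h1, h2] at h3
      exact absurd h3 h4.not_gt
  have himg : (homEdges H φ).image (fun s : EdgeIdx n => s(s.1.1, s.1.2)) =
      H.edgeFinset.image (Sym2.map φ) := by
    ext x
    induction x using Sym2.ind with
    | _ i j =>
      simp only [Finset.mem_image, SimpleGraph.mem_edgeFinset]
      constructor
      · rintro ⟨s, hs, hx⟩
        obtain ⟨a, b, hab, ha, hb⟩ := mem_homEdges.1 hs
        exact ⟨s(a, b), hab, by rw [← hx, Sym2.map_mk, ha, hb]⟩
      · rintro ⟨x, hx, hxe⟩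
        induction x using Sym2.ind with
        | _ a b =>
          rw [SimpleGraph.mem_edgeSet] at hx
          rw [← hxe, Sym2.map_mk]
          rcases lt_trichotomy (φ a) (φ b) with hlt | heq | hlt
          · exact ⟨⟨(φ a, φ b), hlt⟩, mem_homEdges.2 ⟨a, b, hx, rfl, rfl⟩, rfl⟩
          · exact absurd (φ.injective heq) hx.ne
          · exact ⟨⟨(φ b, φ a), hlt⟩, mem_homEdges.2 ⟨b, a, hx.symm, rfl, rfl⟩, Sym2.eq_swap⟩
  rw [← Finset.card_image_of_injective _ hinj, himg,
    Finset.card_image_of_injective _ (Sym2.map.injective φ.injective), eCount,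
    Nat.card_eq_fintype_card, SimpleGraph.edgeFinset_card]

open scoped Classical in
theorem card_adj_pairs {v : ℕ} (H : SimpleGraph (Fin v)) :
    #{x : Fin v × Fin v | H.Adj x.1 x.2} = 2 * eCount H := by
  rw [eCount, Nat.card_eq_fintype_card, ← SimpleGraph.edgeFinset_card,
    ← SimpleGraph.sum_degrees_eq_twice_card_edges, Finset.card_filter,
    ← Finset.univ_product_univ, Finset.sum_product]
  refine Finset.sum_congr rfl fun a _ => ?_
  rw [← Finset.card_filter, ← SimpleGraph.card_neighborFinset_eq_degree,
    SimpleGraph.neighborFinset_eq_filter]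

open scoped Classical in
theorem card_embedding_fix_pair_eq {v n : ℕ} {a b : Fin v} {i j i' j' : Fin n} (hij : i ≠ j)
    (hij' : i' ≠ j') :
    #{φ : Fin v ↪ Fin n | φ a = i ∧ φ b = j} =
      #{φ : Fin v ↪ Fin n | φ a = i' ∧ φ b = j'} := by
  obtain ⟨σ, hi, hj⟩ : ∃ σ : Equiv.Perm (Fin n), σ i = i' ∧ σ j = j' := by
    refine ⟨(Equiv.swap i i').trans (Equiv.swap (Equiv.swap i i' j) j'), ?_, ?_⟩
    · rw [Equiv.trans_apply, Equiv.swap_apply_left, Equiv.swap_apply_of_ne_of_ne _ hij']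
      intro h
      apply hij
      have := congrArg (Equiv.swap i i') h
      rwa [Equiv.swap_apply_right, Equiv.swap_apply_self] at this
    · rw [Equiv.trans_apply, Equiv.swap_apply_left]
  refine Finset.card_bij' (fun φ _ => φ.trans σ.toEmbedding)
    (fun φ _ => φ.trans σ.symm.toEmbedding) ?_ ?_ ?_ ?_
  · intro φ hφ
    obtain ⟨h1, h2⟩ := (Finset.mem_filter.1 hφ).2
    simp [h1, h2, hi, hj]
  · intro φ hφ
    obtain ⟨h1, h2⟩ := (Finset.mem_filter.1 hφ).2
    simp [h1, h2, ← hi, ← hj]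
  · intro φ _; ext x; simp
  · intro φ _; ext x; simp

open scoped Classical in
theorem card_embedding_fix_pair {v n : ℕ} {a b : Fin (v + 2)} (hab : a ≠ b) {i j : Fin (n + 2)}
    (hij : i ≠ j) :
    #{φ : Fin (v + 2) ↪ Fin (n + 2) | φ a = i ∧ φ b = j} = n.descFactorial v := by
  have h1 : (univ : Finset (Fin (v + 2) ↪ Fin (n + 2))).card =
      ∑ x ∈ (univ : Finset (Fin (n + 2))).offDiag,
        #{φ : Fin (v + 2) ↪ Fin (n + 2) | (φ a, φ b) = x} := by
    refine Finset.card_eq_sum_card_fiberwise fun φ _ => ?_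
    simpa using hab
  have h2 : ∀ x ∈ (univ : Finset (Fin (n + 2))).offDiag,
      #{φ : Fin (v + 2) ↪ Fin (n + 2) | (φ a, φ b) = x} =
      #{φ : Fin (v + 2) ↪ Fin (n + 2) | φ a = i ∧ φ b = j} := by
    rintro ⟨i', j'⟩ hx
    have hx' : i' ≠ j' := by simpa using hx
    simp only [Prod.mk.injEq]
    exact card_embedding_fix_pair_eq hx' hij
  rw [Finset.sum_congr rfl h2, Finset.sum_const, smul_eq_mul, Finset.offDiag_card,
    Finset.card_univ, Fintype.card_embedding_eq] at h1
  simp only [Finset.card_univ, Fintype.card_fin, Nat.succ_descFactorial_succ] at h1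
  have h3 : (n + 2) * (n + 2) - (n + 2) = (n + 1 + 1) * (n + 1) := by
    have : (n + 2) * (n + 2) = (n + 1 + 1) * (n + 1) + (n + 2) := by ring
    omega
  rw [h3, ← mul_assoc] at h1
  exact (Nat.eq_of_mul_eq_mul_left (by positivity) h1).symm

open scoped Classical in
theorem card_embedding_fix_triple_mul_le {v n : ℕ} {a b c : Fin v} (hab : a ≠ b) (hac : a ≠ c)
    (hbc : b ≠ c) (i j k : Fin n) :
    #{φ : Fin v ↪ Fin n | φ a = i ∧ φ b = j ∧ φ c = k} * n ≤ n ^ (v - 2) := by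
  have hT : ({a, b, c} : Finset (Fin v)).card = 3 := Finset.card_eq_three.2
    ⟨a, b, c, hab, hac, hbc, rfl⟩
  have hv : 3 ≤ v := by
    have := Finset.card_le_univ ({a, b, c} : Finset (Fin v))
    rwa [hT, Fintype.card_fin] at this
  have h1 : #{φ : Fin v ↪ Fin n | φ a = i ∧ φ b = j ∧ φ c = k} ≤ n ^ (v - 3) := by
    have hcard : Fintype.card ({x : Fin v // x ∉ ({a, b, c} : Finset (Fin v))} → Fin n) =
        n ^ (v - 3) := by
      rw [Fintype.card_fun, Fintype.card_fin, Fintype.card_subtype_compl, Fintype.card_fin,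
        Fintype.card_coe, hT]
    rw [← hcard, ← Finset.card_univ]
    refine Finset.card_le_card_of_injOn (fun φ x => φ x.1) (fun _ _ => mem_univ _) ?_
    intro φ hφ ψ hψ h
    obtain ⟨h1, h2, h3⟩ := (Finset.mem_filter.1 hφ).2
    obtain ⟨g1, g2, g3⟩ := (Finset.mem_filter.1 hψ).2
    ext x
    congr 1
    by_cases hx : x ∈ ({a, b, c} : Finset (Fin v))
    · simp only [Finset.mem_insert, Finset.mem_singleton] at hx
      rcases hx with rfl | rfl | rfl
      · rw [h1, g1]
      · rw [h2, g2]
      · rw [h3, g3]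
    · exact congrFun h ⟨x, hx⟩
  calc _ ≤ n ^ (v - 3) * n := Nat.mul_le_mul_right _ h1
    _ = n ^ (v - 2) := by rw [← pow_succ]; congr 1; omega

theorem famDeg_homEdges {v n : ℕ} (H : SimpleGraph (Fin (v + 2))) (s : EdgeIdx (n + 2)) :
    famDeg (homEdges H (n := n + 2)) s = 2 * eCount H * n.descFactorial v := by
  classical
  have h1 : ({φ | s ∈ homEdges H φ} : Finset (Fin (v + 2) ↪ Fin (n + 2))) =
      ({x : Fin (v + 2) × Fin (v + 2) | H.Adj x.1 x.2} : Finset _).biUnion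
        fun x => {φ | φ x.1 = s.1.1 ∧ φ x.2 = s.1.2} := by
    ext φ
    simp only [Finset.mem_filter, Finset.mem_univ, true_and, mem_homEdges, Finset.mem_biUnion,
      Prod.exists]
  unfold famDeg
  rw [h1, Finset.card_biUnion]
  · rw [← card_adj_pairs H]
    rw [Finset.sum_congr rfl (g := fun _ => n.descFactorial v), Finset.sum_const, smul_eq_mul]
    intro x hx
    exact card_embedding_fix_pair (Finset.mem_filter.1 hx).2.ne s.2.ne
  · intro x _ y _ hxy
    refine Finset.disjoint_left.2 fun φ h2 h3 => hxy ?_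
    obtain ⟨h4, h5⟩ := (Finset.mem_filter.1 h2).2
    obtain ⟨h6, h7⟩ := (Finset.mem_filter.1 h3).2
    exact Prod.ext (φ.injective (h4.trans h6.symm)) (φ.injective (h5.trans h7.symm))

theorem famCodeg_homEdges_mul_le {v n : ℕ} (H : SimpleGraph (Fin v)) {s t : EdgeIdx n}
    (hst : s ≠ t) : famCodeg (homEdges H (n := n)) s t * n ≤ v ^ 3 * n ^ (v - 2) := by
  classical
  obtain ⟨z, hz, hz1, hz2⟩ : ∃ z, (z = t.1.1 ∨ z = t.1.2) ∧ z ≠ s.1.1 ∧ z ≠ s.1.2 := by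
    by_contra! hcon
    have h1 := hcon t.1.1 (Or.inl rfl)
    have h2 := hcon t.1.2 (Or.inr rfl)
    have hs := s.2
    have ht := t.2
    apply hst
    by_cases h3 : t.1.1 = s.1.1
    · by_cases h4 : t.1.2 = s.1.1
      · rw [h3, h4] at ht
        exact absurd ht (lt_irrefl _)
      · exact Subtype.ext (Prod.ext h3.symm (h2 h4).symm)
    · have h5 := h1 h3
      by_cases h4 : t.1.2 = s.1.1
      · rw [h5, h4] at ht
        exact absurd ht hs.not_gt
      · rw [h5, h2 h4] at ht
        exact absurd ht (lt_irrefl _)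
  let T : Finset (Fin v × Fin v × Fin v) := {x | x.1 ≠ x.2.1 ∧ x.1 ≠ x.2.2 ∧ x.2.1 ≠ x.2.2}
  have h1 : ({φ | s ∈ homEdges H φ ∧ t ∈ homEdges H φ} : Finset (Fin v ↪ Fin n)) ⊆
      T.biUnion fun x => {φ | φ x.1 = s.1.1 ∧ φ x.2.1 = s.1.2 ∧ φ x.2.2 = z} := by
    intro φ hφ
    obtain ⟨hs, ht⟩ := (Finset.mem_filter.1 hφ).2
    obtain ⟨a, b, hab, ha, hb⟩ := mem_homEdges.1 hs
    obtain ⟨c, d, hcd, hc, hd⟩ := mem_homEdges.1 ht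
    obtain ⟨x, hx⟩ : ∃ x, φ x = z := by
      rcases hz with rfl | rfl
      · exact ⟨c, hc⟩
      · exact ⟨d, hd⟩
    refine Finset.mem_biUnion.2 ⟨(a, b, x), ?_, ?_⟩
    · refine Finset.mem_filter.2 ⟨mem_univ _, hab.ne, ?_, ?_⟩
      · exact fun h => hz1 (hx.symm.trans ((congrArg φ h.symm).trans ha))
      · exact fun h => hz2 (hx.symm.trans ((congrArg φ h.symm).trans hb))
    · exact Finset.mem_filter.2 ⟨mem_univ _, ha, hb, hx⟩
  have h2 := (Finset.card_le_card h1).trans Finset.card_biUnion_le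
  unfold famCodeg
  refine (Nat.mul_le_mul_right n h2).trans ?_
  rw [Finset.sum_mul]
  have h3 : ∀ x ∈ T, #{φ : Fin v ↪ Fin n | φ x.1 = s.1.1 ∧ φ x.2.1 = s.1.2 ∧ φ x.2.2 = z} * n ≤
      n ^ (v - 2) := by
    intro x hx
    obtain ⟨g1, g2, g3⟩ := (Finset.mem_filter.1 hx).2
    exact card_embedding_fix_triple_mul_le g1 g2 g3 _ _ _
  refine (Finset.sum_le_sum h3).trans ?_
  rw [Finset.sum_const, smul_eq_mul]
  refine Nat.mul_le_mul_right _ ((Finset.card_le_univ T).trans (le_of_eq ?_))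
  simp only [Fintype.card_prod, Fintype.card_fin]
  ring

theorem pow_sub_le_descFactorial_real (n w : ℕ) :
    ((n : ℝ) + 2) ^ w - (w * (w + 1)) * ((n : ℝ) + 2) ^ w / ((n : ℝ) + 2) ≤
      n.descFactorial w := by
  have hn : (0 : ℝ) < (n : ℝ) + 2 := by positivity
  set N : ℝ := (n : ℝ) + 2 with hN
  have e1 : N ^ w - (w * (w + 1)) * N ^ w / N = N ^ w * (1 + w * (-((w + 1) / N))) := by
    field_simp
    ring
  rw [e1]
  by_cases h : w ≤ n + 1
  · have h1 : ((n + 1 - w : ℕ) : ℝ) ^ w ≤ n.descFactorial w := by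
      exact_mod_cast Nat.pow_sub_le_descFactorial n w
    refine le_trans ?_ h1
    have h2 : ((n + 1 - w : ℕ) : ℝ) = N * (1 + -((w + 1) / N)) := by
      rw [Nat.cast_sub h]
      push_cast
      field_simp
      rw [hN]
      ring
    rw [h2, mul_pow]
    refine mul_le_mul_of_nonneg_left (one_add_mul_le_pow ?_ w) (by positivity)
    have h3 : ((w : ℝ) + 1) / N ≤ 1 := by
      rw [div_le_one hn, hN]
      have : (w : ℝ) ≤ n + 1 := by exact_mod_cast h
      linarith
    linarith
  · push Not at h
    have hw : (n : ℝ) + 2 ≤ w := by exact_mod_cast h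
    refine le_trans ?_ (Nat.cast_nonneg _)
    refine mul_nonpos_of_nonneg_of_nonpos (by positivity) ?_
    have h3 : 1 ≤ ((w : ℝ) + 1) / N := by
      rw [le_div_iff₀ hn]
      linarith
    nlinarith

/-- The error constant in the degree and codegree estimates for copies of a graph. -/
def homErr (v e : ℕ) : ℝ := 2 * e * (v * (v + 1)) + v ^ 3

theorem two_le_of_one_le_eCount {v : ℕ} {H : SimpleGraph (Fin v)} (he : 1 ≤ eCount H) :
    2 ≤ v := by
  by_contra! hv
  have hss : Subsingleton (Fin v) := Fin.subsingleton_iff_le_one.2 (by omega)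
  have hH : H = ⊥ := by
    ext a b
    simpa using fun h : H.Adj a b => h.ne (Subsingleton.elim a b)
  rw [hH] at he
  simp [eCount] at he

theorem isUniformFamily_homEdges {v n : ℕ} (H : SimpleGraph (Fin v)) (he : 1 ≤ eCount H)
    (hn : 2 ≤ n) :
    IsUniformFamily (homEdges H (n := n)) (eCount H) ((n : ℝ) ^ (v - 2)) n
      (homErr v (eCount H)) := by
  have hv := two_le_of_one_le_eCount he
  obtain ⟨w, rfl⟩ := Nat.exists_eq_add_of_le' hv
  obtain ⟨m, rfl⟩ := Nat.exists_eq_add_of_le' hn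
  have hnpos : (0 : ℝ) < ((m + 2 : ℕ) : ℝ) := by positivity
  have hmm : ((m + 2 : ℕ) : ℝ) = (m : ℝ) + 2 := by push_cast; ring
  refine ⟨he, by positivity, by unfold homErr; positivity, card_homEdges H, ?_, ?_, ?_⟩
  · intro s
    rw [famDeg_homEdges, Nat.add_sub_cancel]
    push_cast
    refine mul_le_mul_of_nonneg_left ?_ (by positivity)
    have h1 : ((m.descFactorial w : ℕ) : ℝ) ≤ (m : ℝ) ^ w := by
      exact_mod_cast Nat.descFactorial_le_pow m w
    refine h1.trans (pow_le_pow_left₀ (by positivity) (by linarith) w)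
  · intro s
    rw [famDeg_homEdges, Nat.add_sub_cancel, hmm]
    have h1 := pow_sub_le_descFactorial_real m w
    have h2 := mul_le_mul_of_nonneg_left h1 (by positivity : (0 : ℝ) ≤ 2 * eCount H)
    have h3 : 2 * (eCount H : ℝ) * ((w * (w + 1)) * ((m : ℝ) + 2) ^ w / ((m : ℝ) + 2)) ≤
        homErr (w + 2) (eCount H) * ((m : ℝ) + 2) ^ w / ((m : ℝ) + 2) := by
      rw [mul_div_assoc, mul_div_assoc, ← mul_assoc]
      refine mul_le_mul_of_nonneg_right ?_ (by positivity)
      unfold homErr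
      push_cast
      have h4 : (w : ℝ) * (w + 1) ≤ (w + 2) * (w + 2 + 1) := by
        nlinarith [(Nat.cast_nonneg w : (0 : ℝ) ≤ w)]
      have h5 := mul_le_mul_of_nonneg_left h4 (by positivity : (0 : ℝ) ≤ 2 * eCount H)
      have h6 : (0 : ℝ) ≤ ((w : ℝ) + 2) ^ 3 := by positivity
      linarith
    push_cast
    linarith
  · intro s t hst
    rw [le_div_iff₀ hnpos]
    have h1 : (famCodeg (homEdges H (n := m + 2)) s t : ℝ) * ((m + 2 : ℕ) : ℝ) ≤
        ((w + 2 : ℕ) : ℝ) ^ 3 * ((m + 2 : ℕ) : ℝ) ^ (w + 2 - 2) := by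
      exact_mod_cast famCodeg_homEdges_mul_le H hst
    refine h1.trans (mul_le_mul_of_nonneg_right ?_ (by positivity))
    unfold homErr
    have : (0 : ℝ) ≤ 2 * eCount H * (((w + 2 : ℕ) : ℝ) * (((w + 2 : ℕ) : ℝ) + 1)) := by positivity
    linarith

end Graphs

section ERGM

variable {k : ℕ} {β : Fin (k + 1) → ℝ} {v : Fin (k + 1) → ℕ}
  {H : ∀ j : Fin (k + 1), SimpleGraph (Fin (v j))}

theorem hasDerivAt_PhiFn (β : Fin (k + 1) → ℝ) (v : Fin (k + 1) → ℕ)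
    (H : ∀ j : Fin (k + 1), SimpleGraph (Fin (v j))) (a : ℝ) :
    HasDerivAt (PhiFn β v H) (∑ j, β j * (eCount (H j) : ℝ) *
      (((eCount (H j) - 1 : ℕ) : ℝ) * a ^ (eCount (H j) - 1 - 1))) a := by
  unfold PhiFn
  exact HasDerivAt.fun_sum fun j _ => (hasDerivAt_pow _ a).const_mul _

theorem deriv_PhiFn_le (hβ : ∀ j : Fin (k + 1), j ≠ 0 → 0 < β j) (he0 : eCount (H 0) = 1)
    {a : ℝ} (ha0 : 0 ≤ a) (ha1 : a ≤ 1) : deriv (PhiFn β v H) a ≤ deriv (PhiFn β v H) 1 := by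
  rw [(hasDerivAt_PhiFn β v H a).deriv, (hasDerivAt_PhiFn β v H 1).deriv]
  refine Finset.sum_le_sum fun j _ => ?_
  by_cases hj : j = 0
  · subst hj
    simp [he0]
  · have := hβ j hj
    gcongr

theorem ergmWeight_pos (n : ℕ) (y : EdgeIdx n → Bool) : 0 < ergmWeight β v H n y :=
  Real.exp_pos _

theorem ergmZ_pos (n : ℕ) : 0 < ergmZ β v H n :=
  Finset.sum_pos (fun y _ => ergmWeight_pos n y) Finset.univ_nonempty

theorem condProb_ergmProb {n : ℕ} (hv : ∀ j, 2 ≤ v j) (s : EdgeIdx n) (y : EdgeIdx n → Bool) :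
    condProb (ergmProb β v H n) s y = Real.sigmoid
      (∑ j, β j / (n : ℝ) ^ (v j - 2) * discDeriv s (famCount (homEdges (H j) (n := n))) y) := by
  have hcoef : ∀ j, (n : ℝ) ^ ((2 : ℤ) - (v j : ℤ)) = ((n : ℝ) ^ (v j - 2))⁻¹ := by
    intro j
    rw [← zpow_natCast, ← zpow_neg, Nat.cast_sub (hv j)]
    congr 1
    push_cast
    ring
  have hE : ∑ j, β j / (n : ℝ) ^ (v j - 2) * discDeriv s (famCount (homEdges (H j) (n := n))) y =
      ∑ j, β j * (n : ℝ) ^ ((2 : ℤ) - (v j : ℤ)) *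
          (homCount (H j) (Function.update y s true) : ℝ) -
        ∑ j, β j * (n : ℝ) ^ ((2 : ℤ) - (v j : ℤ)) *
          (homCount (H j) (Function.update y s false) : ℝ) := by
    rw [← Finset.sum_sub_distrib]
    refine Finset.sum_congr rfl fun j _ => ?_
    rw [hcoef, discDeriv, homCount_eq_famCount, homCount_eq_famCount]
    ring
  have hZ := ergmZ_pos (β := β) (v := v) (H := H) n
  rw [hE, Real.sigmoid_def, neg_sub, Real.exp_sub]
  change ergmWeight β v H n _ / _ / (ergmWeight β v H n _ / _ + ergmWeight β v H n _ / _) =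
    (1 + ergmWeight β v H n _ / ergmWeight β v H n _)⁻¹
  have h1 := ergmWeight_pos (β := β) (v := v) (H := H) n (Function.update y s true)
  have h0 := ergmWeight_pos (β := β) (v := v) (H := H) n (Function.update y s false)
  field_simp

theorem isDobrushinGibbs_ergmProb (hβ : ∀ j : Fin (k + 1), j ≠ 0 → 0 < β j)
    (he0 : eCount (H 0) = 1) (he : ∀ j, 1 ≤ eCount (H j))
    (hdob : deriv (PhiFn β v H) 1 < 2) {n : ℕ} (hn : 2 ≤ n) :
    IsDobrushinGibbs (ergmProb β v H n) β (fun j => homEdges (H j) (n := n))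
      (fun j => eCount (H j)) (fun j => (n : ℝ) ^ (v j - 2)) n
      (fun j => homErr (v j) (eCount (H j))) (deriv (PhiFn β v H) 1 / 2) where
  pos y := div_pos (ergmWeight_pos n y) (ergmZ_pos n)
  sum_eq_one := by
    simp only [ergmProb]
    rw [← Finset.sum_div]
    exact div_self (ergmZ_pos n).ne'
  condProb_eq := condProb_ergmProb fun j => two_le_of_one_le_eCount (he j)
  family j := isUniformFamily_homEdges (H j) (he j) hn
  one_le := by exact_mod_cast (by omega : 1 ≤ n)
  lt_one := by linarith
  influence_le := by
    rw [mul_div_cancel₀ _ two_ne_zero, (hasDerivAt_PhiFn β v H 1).deriv]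
    refine Finset.sum_le_sum fun j _ => ?_
    by_cases hj : j = 0
    · subst hj
      simp [he0]
    · rw [abs_of_pos (hβ j hj), one_pow, Nat.cast_sub (he j)]
      push_cast
      linarith

theorem sigmaSq_pos (hβ : ∀ j : Fin (k + 1), j ≠ 0 → 0 < β j) (he0 : eCount (H 0) = 1)
    (hdob : deriv (PhiFn β v H) 1 < 2) {p : ℝ} (hp : p ∈ Set.Ioo (0 : ℝ) 1) {n : ℕ}
    (hn : 2 ≤ n) : 0 < sigmaSq β v H p n := by
  obtain ⟨hp0, hp1⟩ := hp
  have hq : 0 < 1 - p := sub_pos.2 hp1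
  have hn' : (2 : ℝ) ≤ n := by exact_mod_cast hn
  have h1 : deriv (PhiFn β v H) p < 2 := (deriv_PhiFn_le hβ he0 hp0.le hp1.le).trans_lt hdob
  have h2 : 2 * p * (1 - p) * deriv (PhiFn β v H) p < 2 * p * (1 - p) * 2 := by gcongr
  have h3 : 0 < 1 - 2 * p * (1 - p) * deriv (PhiFn β v H) p := by
    nlinarith [sq_nonneg (2 * p - 1)]
  have h4 : 0 < (n : ℝ) * ((n : ℝ) - 1) / 2 := by
    have : 0 < (n : ℝ) - 1 := by linarith
    positivity
  unfold sigmaSq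
  positivity

theorem discDeriv_edgeSum {n : ℕ} (s : EdgeIdx n) (y : EdgeIdx n → Bool) :
    discDeriv s edgeSum y = 1 := by
  unfold edgeSum
  rw [discDeriv_sum, Finset.sum_eq_single s]
  · simp [discDeriv]
  · intro t _ ht
    simp [discDeriv, Function.update_of_ne ht]
  · simp

theorem card_edgeIdx_le (n : ℕ) : Fintype.card (EdgeIdx n) ≤ n ^ 2 := by
  have := Fintype.card_le_of_injective
    (fun s : EdgeIdx n => (s.1 : Fin n × Fin n)) Subtype.val_injective
  simpa [sq] using this

end ERGM

/-- **Lemma 5.1**: higher-order variance bound for subgraph counts in Dobrushin's uniqueness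
region: `Var(|Hom(H,G_Y)| − 2 n^{v−2} e p^{e−1} σ_n W_n) ≤ C n^{2v−3}`. -/
theorem ergm_hom_variance_dobrushin {k : ℕ} (β : Fin (k + 1) → ℝ) (v : Fin (k + 1) → ℕ)
    (H : ∀ j : Fin (k + 1), SimpleGraph (Fin (v j)))
    -- `β₂, …, β_k > 0`
    (hβ : ∀ j : Fin (k + 1), j ≠ 0 → 0 < β j)
    -- `H₁` is a single edge
    (hv0 : v 0 = 2) (he0 : eCount (H 0) = 1)
    -- the graphs have no isolated vertices
    (hnoiso : ∀ (j : Fin (k + 1)) (a : Fin (v j)), ∃ b, (H j).Adj a b)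
    -- `H₂, …, H_k` have at least two edges
    (hedges : ∀ j : Fin (k + 1), j ≠ 0 → 2 ≤ eCount (H j))
    -- the subcritical region: unique fixed point `p ∈ (0,1)` with `φ_β'(p) < 1`
    (p : ℝ) (hp : p ∈ Set.Ioo (0 : ℝ) 1)
    (hfix : phiFn β v H p = p)
    (huniq : ∀ q ∈ Set.Ioo (0 : ℝ) 1, phiFn β v H q = q → q = p)
    (hsub : deriv (phiFn β v H) p < 1)
    -- Dobrushin's uniqueness region `Φ_β'(1) < 2`
    (hdob : deriv (PhiFn β v H) 1 < 2)
    -- the fixed graph `H`, possibly with isolated vertices, with `e ≥ 1` edges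
    (vH : ℕ) (Hg : SimpleGraph (Fin vH)) (hHe : 1 ≤ eCount Hg) :
    ∃ C : ℝ, 0 < C ∧ ∀ n : ℕ, 2 ≤ n →
      ergmVar β v H n (fun y => (homCount Hg y : ℝ) -
          2 * (n : ℝ) ^ ((vH : ℤ) - 2) * (eCount Hg : ℝ) * p ^ (eCount Hg - 1) *
            Real.sqrt (sigmaSq β v H p n) * Wn β v H p n y) ≤
        C * (n : ℝ) ^ (2 * (vH : ℤ) - 3) := by
  have he : ∀ j, 1 ≤ eCount (H j) := by
    intro j
    by_cases hj : j = 0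
    · subst hj
      exact he0.ge
    · exact le_trans (by norm_num) (hedges j hj)
  have hvH := two_le_of_one_le_eCount hHe
  have hsig : Real.sigmoid (2 * ∑ j, β j * eCount (H j) * p ^ (eCount (H j) - 1)) = p := by
    refine Eq.trans ?_ hfix
    change Real.sigmoid (2 * PhiFn β v H p) =
      Real.exp (2 * PhiFn β v H p) / (Real.exp (2 * PhiFn β v H p) + 1)
    rw [Real.sigmoid_def, Real.exp_neg]
    have := Real.exp_pos (2 * PhiFn β v H p)
    field_simp
  obtain ⟨K, hK⟩ : ∃ K : ℝ, ∀ n : ℕ, 2 ≤ n → ∀ g : (EdgeIdx n → Bool) → ℝ,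
      (∀ s y, discDeriv s g y = discDeriv s (famCount (homEdges Hg (n := n))) y -
        2 * (eCount Hg : ℝ) * (n : ℝ) ^ (vH - 2) * p ^ (eCount Hg - 1)) →
      ergmVar β v H n g ≤
        K * (Fintype.card (EdgeIdx n) * ((n : ℝ) ^ (vH - 2)) ^ 2 / n) :=
    ⟨_, fun n hn g hg =>
      (isDobrushinGibbs_ergmProb hβ he0 he hdob hn).variance_famCount_sub_le
        (isUniformFamily_homEdges Hg hHe hn) hp.1.le hp.2.le hsig g hg⟩
  refine ⟨|K| + 1, by positivity, fun n hn => ?_⟩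
  have hn0 : (0 : ℝ) < n := by exact_mod_cast (by omega : 0 < n)
  have hσ := Real.sqrt_pos.2 (sigmaSq_pos hβ he0 hdob hp hn)
  have hpow : (n : ℝ) ^ ((vH : ℤ) - 2) = (n : ℝ) ^ (vH - 2) := by
    rw [← zpow_natCast, Nat.cast_sub hvH, Nat.cast_two]
  refine (hK n hn _ fun s y => ?_).trans ?_
  · have h1 := discDeriv_edgeSum s y
    simp only [discDeriv, Wn, hpow, homCount_eq_famCount] at h1 ⊢
    field_simp
    linear_combination (-2 * (n : ℝ) ^ (vH - 2) * eCount Hg * p ^ (eCount Hg - 1)) * h1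
  · have h1 : (Fintype.card (EdgeIdx n) : ℝ) ≤ (n : ℝ) ^ 2 := by
      exact_mod_cast card_edgeIdx_le n
    have h2 : (n : ℝ) ^ (2 * (vH : ℤ) - 3) = (n : ℝ) ^ 2 * ((n : ℝ) ^ (vH - 2)) ^ 2 / n := by
      rw [← hpow, ← zpow_natCast, ← zpow_natCast, ← zpow_mul, ← zpow_add₀ hn0.ne',
        div_eq_mul_inv, ← zpow_neg_one, ← zpow_add₀ hn0.ne']
      congr 1
      push_cast
      ring
    rw [h2]
    gcongr
    linarith [le_abs_self K]
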